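/- arXiv:2203.06268 — 2 statements merged into one kernel-verified Lean document; each statement's English description precedes it below -/
import Mathlib

section
/- For all sufficiently large n the following holds. Let p' be a prime with W < p' ≤ n^{1/3} and let S ⊆ 𝒫'_W with |S| < k. Then |B_S ∩ {m : p' | m}| ≤ 2|B_S|/p' and |C_S ∩ {m : p' | m}| ≤ 2|C_S|/p'. Moreover, for any prime p' > n^{1/3} one has |B_S ∩ {m : p' | m}| ≤ 2n^{2/3} and |C_S ∩ {m : p' | m}| ≤ 2n^{2/3}. -/
open Real Filter

/-- `W = W(n) = exp(2^{-10} (log n · log log n)^{1/2})`. -/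
noncomputable def Wp (n : ℕ) : ℝ :=
  Real.exp ((2 : ℝ) ^ (-10 : ℤ) * Real.sqrt (Real.log n * Real.log (Real.log n)))

/-- `k = k(n) = 2^{-5} (log n / log log n)^{1/2}`. -/
noncomputable def kp (n : ℕ) : ℝ :=
  (2 : ℝ) ^ (-5 : ℤ) * Real.sqrt (Real.log n / Real.log (Real.log n))

/-- `α = α(n) = exp(−k log k)`. -/
noncomputable def ap (n : ℕ) : ℝ := Real.exp (-(kp n * Real.log (kp n)))

/-- `𝒫_W`: the set of primes `p ≤ W(n)`. -/
noncomputable def primesLe (n : ℕ) : Set ℕ := {p : ℕ | p.Prime ∧ (p : ℝ) ≤ Wp n}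

/-- `𝒫'_W = 𝒫_W \ {2}`: the odd primes `p ≤ W(n)`. -/
noncomputable def primesLe' (n : ℕ) : Set ℕ := primesLe n \ {2}

/-- `[n]_o = {1, 3, …, 2n−1}`: the first `n` odd positive integers. -/
def oddSet (n : ℕ) : Set ℕ := {m : ℕ | Odd m ∧ m < 2 * n}

/-- `B_S`: the set of `m ∈ {1,…,n}` whose set of prime divisors in `𝒫'_W` is exactly `S`. -/
noncomputable def BSet (n : ℕ) (S : Set ℕ) : Set ℕ :=
  {m : ℕ | 1 ≤ m ∧ m ≤ n ∧ ∀ p ∈ primesLe' n, (p ∣ m ↔ p ∈ S)}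

/-- `C_S`: the set of `m ∈ [n]_o` whose set of prime divisors in `𝒫'_W` is exactly `S`. -/
noncomputable def CSet (n : ℕ) (S : Set ℕ) : Set ℕ :=
  {m : ℕ | m ∈ oddSet n ∧ ∀ p ∈ primesLe' n, (p ∣ m ↔ p ∈ S)}

/-- The elementary symmetric sum of degree `j` of the values `x i`, `i ∈ A`. -/
noncomputable def elemSymm {ι : Type*} (A : Finset ι) (x : ι → ℝ) (j : ℕ) : ℝ :=
  ∑ B ∈ A.powersetCard j, ∏ i ∈ B, x i

lemma elemSymm_zero {ι : Type*} (A : Finset ι) (x : ι → ℝ) : elemSymm A x 0 = 1 := by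
  simp [elemSymm]

lemma elemSymm_empty_succ {ι : Type*} (x : ι → ℝ) (j : ℕ) : elemSymm ∅ x (j + 1) = 0 := by
  rw [elemSymm, Finset.powersetCard_eq_empty.2 (by simp), Finset.sum_empty]

lemma elemSymm_insert_succ {ι : Type*} [DecidableEq ι] {A : Finset ι} {a : ι} (ha : a ∉ A)
    (x : ι → ℝ) (j : ℕ) :
    elemSymm (insert a A) x (j + 1) = elemSymm A x (j + 1) + x a * elemSymm A x j := by
  unfold elemSymm
  rw [Finset.powersetCard_succ_insert ha, Finset.sum_union, Finset.sum_image, Finset.mul_sum]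
  · congr 1
    refine Finset.sum_congr rfl fun B hB => ?_
    rw [Finset.prod_insert fun h => ha ((Finset.mem_powersetCard.1 hB).1 h)]
  · intro B hB C hC h
    have hB' : a ∉ B := fun h => ha ((Finset.mem_powersetCard.1 hB).1 h)
    have hC' : a ∉ C := fun h => ha ((Finset.mem_powersetCard.1 hC).1 h)
    rw [← Finset.erase_insert hB', ← Finset.erase_insert hC', h]
  · rw [Finset.disjoint_left]
    intro B hB hB'
    obtain ⟨C, -, rfl⟩ := Finset.mem_image.1 hB'
    exact ha ((Finset.mem_powersetCard.1 hB).1 (Finset.mem_insert_self a C))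

lemma elemSymm_nonneg {ι : Type*} {A : Finset ι} {x : ι → ℝ} (h0 : ∀ i ∈ A, 0 ≤ x i) (j : ℕ) :
    0 ≤ elemSymm A x j :=
  Finset.sum_nonneg fun _ hB => Finset.prod_nonneg fun i hi =>
    h0 i ((Finset.mem_powersetCard.1 hB).1 hi)

/-- Bonferroni's inequality in weighted form. -/
lemma abs_prod_one_sub_sub_le {ι : Type*} [DecidableEq ι] (A : Finset ι) (x : ι → ℝ)
    (h0 : ∀ i ∈ A, 0 ≤ x i) (h1 : ∀ i ∈ A, x i ≤ 1) (r : ℕ) :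
    |∏ i ∈ A, (1 - x i) - ∑ j ∈ Finset.range r, (-1) ^ j * elemSymm A x j| ≤
      elemSymm A x r := by
  induction A using Finset.induction_on generalizing r with
  | empty =>
    cases r with
    | zero => simp [elemSymm]
    | succ r => simp [Finset.sum_range_succ', elemSymm_empty_succ, elemSymm_zero]
  | insert a A ha ih =>
    have h0' : ∀ i ∈ A, 0 ≤ x i := fun i hi => h0 i (Finset.mem_insert_of_mem hi)
    have h1' : ∀ i ∈ A, x i ≤ 1 := fun i hi => h1 i (Finset.mem_insert_of_mem hi)
    have ih := ih h0' h1'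
    cases r with
    | zero =>
      have hn : 0 ≤ ∏ i ∈ insert a A, (1 - x i) :=
        Finset.prod_nonneg fun i hi => sub_nonneg.2 (h1 i hi)
      have hl : ∏ i ∈ insert a A, (1 - x i) ≤ 1 :=
        Finset.prod_le_one (fun i hi => sub_nonneg.2 (h1 i hi))
          fun i hi => by linarith [h0 i hi]
      simpa [elemSymm_zero, abs_of_nonneg hn] using hl
    | succ r =>
      have hx : 0 ≤ x a := h0 a (Finset.mem_insert_self a A)
      have hF : ∑ j ∈ Finset.range (r + 1), (-1) ^ j * elemSymm (insert a A) x j =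
          (∑ j ∈ Finset.range (r + 1), (-1) ^ j * elemSymm A x j) -
            x a * ∑ j ∈ Finset.range r, (-1) ^ j * elemSymm A x j := by
        rw [Finset.sum_range_succ', Finset.sum_range_succ', Finset.mul_sum]
        simp only [elemSymm_insert_succ ha, elemSymm_zero]
        rw [add_sub_right_comm, ← Finset.sum_sub_distrib]
        congr 1
        refine Finset.sum_congr rfl fun j _ => ?_
        ring
      rw [hF, Finset.prod_insert ha, elemSymm_insert_succ ha]
      have e1 := abs_le.1 (ih (r + 1))
      have e2 := abs_le.1 (ih r)
      have e3 := mul_le_mul_of_nonneg_left e2.1 hx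
      have e4 := mul_le_mul_of_nonneg_left e2.2 hx
      rw [abs_le]
      constructor <;> linarith [e1.1, e1.2]

lemma pow_succ_add_le_add_pow_succ {T y : ℝ} (hT : 0 ≤ T) (hy : 0 ≤ y) (r : ℕ) :
    T ^ (r + 1) + (r + 1) * y * T ^ r ≤ (T + y) ^ (r + 1) := by
  induction r with
  | zero => simp
  | succ r ih =>
    have h := mul_le_mul_of_nonneg_left ih (add_nonneg hT hy)
    have h2 : 0 ≤ (r + 1) * y * y * T ^ r := by positivity
    rw [pow_succ' (T + y)]
    push_cast
    refine le_trans ?_ h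
    ring_nf at h2 ⊢
    linarith

lemma elemSymm_le {ι : Type*} [DecidableEq ι] (A : Finset ι) (x : ι → ℝ)
    (h0 : ∀ i ∈ A, 0 ≤ x i) (r : ℕ) :
    elemSymm A x r ≤ (∑ i ∈ A, x i) ^ r / r.factorial := by
  induction A using Finset.induction_on generalizing r with
  | empty =>
    cases r with
    | zero => simp [elemSymm]
    | succ r => simp [elemSymm_empty_succ]
  | insert a A ha ih =>
    have h0' : ∀ i ∈ A, 0 ≤ x i := fun i hi => h0 i (Finset.mem_insert_of_mem hi)
    cases r with
    | zero => simp [elemSymm_zero]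
    | succ r =>
      have hx : 0 ≤ x a := h0 a (Finset.mem_insert_self a A)
      rw [elemSymm_insert_succ ha, Finset.sum_insert ha]
      have h := pow_succ_add_le_add_pow_succ (Finset.sum_nonneg h0') hx r
      have hf : (0 : ℝ) < r.factorial := by positivity
      calc _ ≤ (∑ i ∈ A, x i) ^ (r + 1) / (r + 1).factorial +
            x a * ((∑ i ∈ A, x i) ^ r / r.factorial) :=
            add_le_add (ih h0' _) (mul_le_mul_of_nonneg_left (ih h0' _) hx)
        _ = ((∑ i ∈ A, x i) ^ (r + 1) + (r + 1) * x a * (∑ i ∈ A, x i) ^ r) /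
            (r + 1).factorial := by
          rw [Nat.factorial_succ]; push_cast; field_simp
        _ ≤ _ := by
          rw [add_comm (x a)]; gcongr

lemma sum_choose_le_add_one_pow (a r : ℕ) :
    ∑ j ∈ Finset.range (r + 1), a.choose j ≤ (a + 1) ^ r := by
  rw [add_pow]
  refine Finset.sum_le_sum fun j hj => ?_
  have h1 : 1 ≤ r.choose j := Nat.choose_pos (by simpa [Nat.lt_succ_iff] using hj)
  simpa using Nat.mul_le_mul (Nat.choose_le_pow a j) h1

lemma prod_Icc_two_one_sub_inv {K : ℕ} (hK : 1 ≤ K) :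
    ∏ p ∈ Finset.Icc 2 K, (1 - (1 : ℝ) / p) = 1 / K := by
  induction K, hK using Nat.le_induction with
  | base => simp
  | succ K hK ih =>
    have hK' : (0 : ℝ) < K := by exact_mod_cast hK
    rw [Finset.prod_Icc_succ_top (by omega), ih]
    push_cast
    field_simp
    ring

lemma inv_le_prod_one_sub_inv {A : Finset ℕ} {K : ℕ} (hK : 1 ≤ K) (hA : A ⊆ Finset.Icc 2 K) :
    (1 : ℝ) / K ≤ ∏ p ∈ A, (1 - (1 : ℝ) / p) := by
  have hn : ∀ p ∈ Finset.Icc 2 K, 0 ≤ 1 - (1 : ℝ) / p := fun p hp => by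
    have : (1 : ℝ) ≤ p := by exact_mod_cast (by have := (Finset.mem_Icc.1 hp).1; omega)
    rw [sub_nonneg, div_le_one (by linarith)]
    exact this
  rw [← prod_Icc_two_one_sub_inv hK, ← Finset.prod_sdiff hA]
  refine mul_le_of_le_one_left (Finset.prod_nonneg fun p hp => hn p (hA hp)) ?_
  refine Finset.prod_le_one (fun p hp => hn p (Finset.mem_sdiff.1 hp).1) fun p _ => ?_
  have : (0 : ℝ) ≤ 1 / p := by positivity
  linarith

/-- Each integer is a product of two primes in at most two ways, so the square of the sum of
reciprocals of the primes up to `K` is at most twice a harmonic sum up to `K ^ 2`. -/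
lemma sq_sum_one_div_primes_le {A : Finset ℕ} {K : ℕ}
    (hA : ∀ p ∈ A, p.Prime ∧ p ≤ K) :
    (∑ p ∈ A, (1 : ℝ) / p) ^ 2 ≤ 2 * (1 + 2 * Real.log K) := by
  have hmaps : ∀ z ∈ A ×ˢ A, z.1 * z.2 ∈ Finset.Icc 1 (K ^ 2) := by
    intro z hz
    rw [Finset.mem_product] at hz
    have h1 := hA _ hz.1
    have h2 := hA _ hz.2
    rw [Finset.mem_Icc, sq]
    exact ⟨Nat.mul_pos h1.1.pos h2.1.pos, Nat.mul_le_mul h1.2 h2.2⟩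
  have hfib : ∀ m : ℕ, ((A ×ˢ A).filter fun z => z.1 * z.2 = m).card ≤ 2 := by
    intro m
    rcases Finset.eq_empty_or_nonempty ((A ×ˢ A).filter fun z => z.1 * z.2 = m) with h | ⟨w, hw⟩
    · simp [h]
    · refine le_trans (Finset.card_le_card (t := {w, (w.2, w.1)}) ?_) Finset.card_le_two
      intro z hz
      simp only [Finset.mem_filter, Finset.mem_product] at hz hw
      have hz1 := (hA _ hz.1.1).1
      have hw1 := (hA _ hw.1.1).1
      have hw2 := (hA _ hw.1.2).1
      have hmul : z.1 * z.2 = w.1 * w.2 := hz.2.trans hw.2.symm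
      have hd : z.1 ∣ w.1 * w.2 := ⟨z.2, hmul.symm⟩
      rw [Finset.mem_insert, Finset.mem_singleton, Prod.ext_iff, Prod.ext_iff]
      rcases (Nat.Prime.dvd_mul hz1).1 hd with h | h
      · have e := (Nat.prime_dvd_prime_iff_eq hz1 hw1).1 h
        rw [e] at hmul
        exact Or.inl ⟨e, Nat.eq_of_mul_eq_mul_left hw1.pos hmul⟩
      · have e := (Nat.prime_dvd_prime_iff_eq hz1 hw2).1 h
        rw [e, mul_comm w.1] at hmul
        exact Or.inr ⟨e, Nat.eq_of_mul_eq_mul_left hw2.pos hmul⟩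
  have hharm : ∑ m ∈ Finset.Icc 1 (K ^ 2), (1 : ℝ) / m ≤ 1 + 2 * Real.log K := by
    have h := harmonic_le_one_add_log (K ^ 2)
    rw [harmonic_eq_sum_Icc] at h
    push_cast at h
    rw [Real.log_pow] at h
    simpa using h
  calc (∑ p ∈ A, (1 : ℝ) / p) ^ 2 = ∑ z ∈ A ×ˢ A, (1 : ℝ) / ((z.1 * z.2 : ℕ) : ℝ) := by
        rw [sq, Finset.sum_mul_sum, ← Finset.sum_product']
        refine Finset.sum_congr rfl fun z _ => ?_
        push_cast
        rw [one_div_mul_one_div]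
    _ = ∑ m ∈ Finset.Icc 1 (K ^ 2), ∑ z ∈ (A ×ˢ A).filter (fun z => z.1 * z.2 = m),
          (1 : ℝ) / ((z.1 * z.2 : ℕ) : ℝ) := (Finset.sum_fiberwise_of_maps_to hmaps _).symm
    _ ≤ ∑ m ∈ Finset.Icc 1 (K ^ 2), 2 * ((1 : ℝ) / m) := by
        refine Finset.sum_le_sum fun m _ => ?_
        rw [Finset.sum_congr rfl (g := fun _ => (1 : ℝ) / m) fun z hz => by
          rw [(Finset.mem_filter.1 hz).2], Finset.sum_const, nsmul_eq_mul]
        refine mul_le_mul_of_nonneg_right ?_ (by positivity)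
        exact_mod_cast hfib m
    _ ≤ _ := by
        rw [← Finset.mul_sum]
        linarith

/-- The truncated sieve: `I` has about `X / D` multiples of each odd `D`, and we count the elements
divisible by all primes of `R` and by no prime of `A`. -/
lemma abs_card_sieve_sub_le {I : Finset ℕ} {X : ℝ}
    (hI : ∀ D : ℕ, Odd D → |((I.filter (D ∣ ·)).card : ℝ) - X / D| ≤ 1)
    {R A : Finset ℕ} (hR : ∀ p ∈ R, p.Prime ∧ Odd p) (hA : ∀ p ∈ A, p.Prime ∧ Odd p)
    (hRA : Disjoint R A) (r : ℕ) :
    |((I.filter fun m => (∀ p ∈ R, p ∣ m) ∧ ∀ p ∈ A, ¬ p ∣ m).card : ℝ) -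
        X / ((∏ p ∈ R, p : ℕ) : ℝ) *
          ∑ j ∈ Finset.range r, (-1) ^ j * elemSymm A (fun p => (1 : ℝ) / p) j| ≤
      X / ((∏ p ∈ R, p : ℕ) : ℝ) * elemSymm A (fun p => (1 : ℝ) / p) r + ((A.card : ℝ) + 1) ^ r := by
  classical
  set Y : ℝ := X / ((∏ p ∈ R, p : ℕ) : ℝ) with hY
  let φ : ℕ → ℝ := fun m => if ∀ p ∈ R, p ∣ m then 1 else 0
  let x : ℕ → ℕ → ℝ := fun m p => if p ∣ m then 1 else 0
  have hφ : ∀ m, 0 ≤ φ m := fun m => by dsimp only [φ]; split_ifs <;> norm_num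
  have hx0 : ∀ m p, 0 ≤ x m p := fun m p => by dsimp only [x]; split_ifs <;> norm_num
  have hx1 : ∀ m p, x m p ≤ 1 := fun m p => by dsimp only [x]; split_ifs <;> norm_num
  have hcount : ((I.filter fun m => (∀ p ∈ R, p ∣ m) ∧ ∀ p ∈ A, ¬ p ∣ m).card : ℝ) =
      ∑ m ∈ I, φ m * ∏ p ∈ A, (1 - x m p) := by
    rw [Finset.card_filter]
    push_cast
    refine Finset.sum_congr rfl fun m _ => ?_
    by_cases h1 : ∀ p ∈ R, p ∣ m
    · by_cases h2 : ∀ p ∈ A, ¬ p ∣ m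
      · rw [if_pos ⟨h1, h2⟩, Finset.prod_congr rfl (g := fun _ => (1 : ℝ))]
        · simp [φ, if_pos h1]
        · intro p hp
          simp [x, h2 p hp]
      · rw [if_neg fun h => h2 h.2]
        push Not at h2
        obtain ⟨p, hp, hpm⟩ := h2
        rw [Finset.prod_eq_zero hp (by simp [x, hpm]), mul_zero]
    · rw [if_neg fun h => h1 h.1]
      simp [φ, if_neg h1]
  have hmono : ∀ B ⊆ A, |(∑ m ∈ I, φ m * ∏ p ∈ B, x m p) - Y * ∏ p ∈ B, (1 : ℝ) / p| ≤ 1 := by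
    intro B hB
    have hdisj : Disjoint R B := Finset.disjoint_of_subset_right hB hRA
    have hprime : ∀ p ∈ R ∪ B, p.Prime ∧ Odd p := by
      intro p hp
      rcases Finset.mem_union.1 hp with h | h
      exacts [hR p h, hA p (hB h)]
    have hodd : Odd (∏ p ∈ R ∪ B, p) :=
      Finset.prod_induction _ Odd (fun _ _ => Odd.mul) odd_one fun p hp => (hprime p hp).2
    have h := hI _ hodd
    have e1 : (((I.filter ((∏ p ∈ R ∪ B, p) ∣ ·)).card : ℕ) : ℝ) =
        ∑ m ∈ I, φ m * ∏ p ∈ B, x m p := by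
      rw [Finset.card_filter]
      push_cast
      refine Finset.sum_congr rfl fun m _ => ?_
      have hiff : (∏ p ∈ R ∪ B, p) ∣ m ↔ (∀ p ∈ R, p ∣ m) ∧ ∀ p ∈ B, p ∣ m := by
        constructor
        · intro hd
          exact ⟨fun p hp => (Finset.dvd_prod_of_mem _ (Finset.mem_union_left _ hp)).trans hd,
            fun p hp => (Finset.dvd_prod_of_mem _ (Finset.mem_union_right _ hp)).trans hd⟩
        · rintro ⟨h1, h2⟩
          refine Finset.prod_primes_dvd m (fun p hp => (hprime p hp).1.prime) fun p hp => ?_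
          rcases Finset.mem_union.1 hp with h | h
          exacts [h1 p h, h2 p h]
      by_cases h1 : ∀ p ∈ R, p ∣ m
      · by_cases h2 : ∀ p ∈ B, p ∣ m
        · rw [if_pos (hiff.2 ⟨h1, h2⟩), Finset.prod_congr rfl (g := fun _ => (1 : ℝ))]
          · simp [φ, if_pos h1]
          · intro p hp
            simp [x, h2 p hp]
        · rw [if_neg fun h => h2 (hiff.1 h).2]
          push Not at h2
          obtain ⟨p, hp, hpm⟩ := h2
          rw [Finset.prod_eq_zero hp (by simp [x, hpm]), mul_zero]
      · rw [if_neg fun h => h1 (hiff.1 h).1]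
        simp [φ, if_neg h1]
    have e2 : X / ((∏ p ∈ R ∪ B, p : ℕ) : ℝ) = Y * ∏ p ∈ B, (1 : ℝ) / p := by
      rw [hY, Finset.prod_union hdisj]
      push_cast
      rw [Finset.prod_div_distrib, Finset.prod_const_one, div_mul_div_comm, mul_one]
    rwa [e1, e2] at h
  have hE : ∀ j, |(∑ m ∈ I, φ m * elemSymm A (x m) j) -
      Y * elemSymm A (fun p => (1 : ℝ) / p) j| ≤ A.card.choose j := by
    intro j
    unfold elemSymm
    simp only [Finset.mul_sum]
    rw [Finset.sum_comm, ← Finset.sum_sub_distrib]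
    refine (Finset.abs_sum_le_sum_abs _ _).trans ?_
    refine (Finset.sum_le_sum fun B hB => hmono B (Finset.mem_powersetCard.1 hB).1).trans ?_
    simp
  have hbon : |(∑ m ∈ I, φ m * ∏ p ∈ A, (1 - x m p)) -
      ∑ j ∈ Finset.range r, (-1) ^ j * ∑ m ∈ I, φ m * elemSymm A (x m) j| ≤
      ∑ m ∈ I, φ m * elemSymm A (x m) r := by
    simp only [Finset.mul_sum]
    rw [Finset.sum_comm, ← Finset.sum_sub_distrib]
    refine (Finset.abs_sum_le_sum_abs _ _).trans (Finset.sum_le_sum fun m _ => ?_)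
    have h := mul_le_mul_of_nonneg_left
      (abs_prod_one_sub_sub_le A (x m) (fun p _ => hx0 m p) (fun p _ => hx1 m p) r) (hφ m)
    rw [← abs_of_nonneg (hφ m), ← abs_mul, abs_of_nonneg (hφ m), mul_sub, Finset.mul_sum] at h
    simpa only [mul_left_comm] using h
  have hmain : |(∑ j ∈ Finset.range r, (-1) ^ j * ∑ m ∈ I, φ m * elemSymm A (x m) j) -
      Y * ∑ j ∈ Finset.range r, (-1) ^ j * elemSymm A (fun p => (1 : ℝ) / p) j| ≤
      ∑ j ∈ Finset.range r, (A.card.choose j : ℝ) := by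
    rw [Finset.mul_sum, ← Finset.sum_sub_distrib]
    refine (Finset.abs_sum_le_sum_abs _ _).trans (Finset.sum_le_sum fun j _ => ?_)
    refine le_of_eq_of_le ?_ (hE j)
    rw [mul_left_comm, ← mul_sub, abs_mul, abs_pow, abs_neg, abs_one, one_pow, one_mul]
  have hcard : ∑ j ∈ Finset.range r, (A.card.choose j : ℝ) + A.card.choose r ≤
      ((A.card : ℝ) + 1) ^ r := by
    rw [← Finset.sum_range_succ (fun j => (A.card.choose j : ℝ))]
    exact_mod_cast sum_choose_le_add_one_pow A.card r
  rw [hcount]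
  have h1 := abs_le.1 hbon
  have h2 := abs_le.1 hmain
  have h3 := abs_le.1 (hE r)
  rw [abs_le]
  constructor <;> linarith [h1.1, h1.2, h2.1, h2.2, h3.1, h3.2]

lemma abs_card_Icc_filter_dvd_sub_le (n D : ℕ) :
    |(((Finset.Icc 1 n).filter (D ∣ ·)).card : ℝ) - (n : ℝ) / D| ≤ 1 := by
  have h : ((Finset.Icc 1 n).filter (D ∣ ·)).card = n / D := Nat.Ioc_filter_dvd_card_eq_div n D
  have h1 : ((n / D : ℕ) : ℝ) ≤ (n : ℝ) / D := Nat.cast_div_le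
  have h2 : (n : ℝ) / D < ((n / D : ℕ) : ℝ) + 1 := by
    rw [← Nat.floor_div_eq_div (K := ℝ)]
    exact Nat.lt_floor_add_one _
  rw [h, abs_le]
  constructor <;> linarith

lemma abs_card_odd_filter_dvd_sub_le (n D : ℕ) (hD : Odd D) :
    |(((((Finset.range (2 * n)).filter Odd)).filter (D ∣ ·)).card : ℝ) - (n : ℝ) / D| ≤ 1 := by
  have h : (((Finset.range (2 * n)).filter Odd).filter (D ∣ ·)).card + n / D = 2 * n / D := by
    rw [← Nat.mul_div_mul_left n D two_pos, ← Nat.Ioc_filter_dvd_card_eq_div (2 * n) D,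
      ← Nat.Ioc_filter_dvd_card_eq_div (2 * n) (2 * D), ← Finset.card_union_of_disjoint]
    · congr 1
      ext m
      have hcop : 2 * D ∣ m ↔ 2 ∣ m ∧ D ∣ m :=
        ⟨fun h => ⟨(Nat.dvd_mul_right 2 D).trans h, (Nat.dvd_mul_left D 2).trans h⟩,
          fun h => (Nat.coprime_two_left.2 hD).mul_dvd_of_dvd_of_dvd h.1 h.2⟩
      simp only [Finset.mem_union, Finset.mem_filter, Finset.mem_range, Finset.mem_Ioc, hcop,
        Nat.odd_iff]
      by_cases hd : D ∣ m <;> simp only [hd, and_true, and_false, or_self]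
      omega
    · rw [Finset.disjoint_left]
      intro m hm hm'
      simp only [Finset.mem_filter, Nat.odd_iff] at hm hm'
      have : 2 ∣ m := (Nat.dvd_mul_right 2 D).trans hm'.2
      omega
  have h' : (((((Finset.range (2 * n)).filter Odd)).filter (D ∣ ·)).card : ℝ) +
      ((n / D : ℕ) : ℝ) = ((2 * n / D : ℕ) : ℝ) := by exact_mod_cast h
  have h1 : ((n / D : ℕ) : ℝ) ≤ (n : ℝ) / D := Nat.cast_div_le
  have h2 : (n : ℝ) / D < ((n / D : ℕ) : ℝ) + 1 := by
    rw [← Nat.floor_div_eq_div (K := ℝ)]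
    exact Nat.lt_floor_add_one _
  have h3 : ((2 * n / D : ℕ) : ℝ) ≤ 2 * ((n : ℝ) / D) := by
    refine Nat.cast_div_le.trans (le_of_eq ?_)
    push_cast
    ring
  have h4 : 2 * ((n : ℝ) / D) < ((2 * n / D : ℕ) : ℝ) + 1 := by
    rw [← Nat.floor_div_eq_div (K := ℝ)]
    refine lt_of_eq_of_lt ?_ (Nat.lt_floor_add_one _)
    push_cast
    ring
  rw [abs_le]
  constructor <;> linarith

/-- A truncation level `r` for the sieve for which both error terms are small. -/
lemma exists_sieve_level {n : ℕ} (hL : 0 < Real.log n) (hl : 100 ≤ Real.log (Real.log n)) :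
    2 < Wp n ∧ ∃ r : ℕ,
      (∀ T : ℝ, 0 ≤ T → T ^ 2 ≤ 2 * (1 + 2 * Real.log (Wp n)) →
        T ^ r / r.factorial ≤ 1 / (8 * Wp n)) ∧
      6 * Wp n ^ (r + 1) * Wp n ^ kp n ≤ (n : ℝ) ^ ((2 : ℝ) / 3) := by
  have hn : (0 : ℝ) < n := by
    rcases Nat.eq_zero_or_pos n with rfl | h
    · simp at hL
    · exact_mod_cast h
  set L := Real.log n with hLdef
  set l := Real.log L with hldef
  set u := Real.sqrt (L / l) with hu
  set v := Real.sqrt (L * l) with hv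
  have hl0 : 0 < l := by linarith
  have hLexp : L = Real.exp l := (Real.exp_log hL).symm
  have hvu : v = u * l := by
    rw [hv, hu, show L * l = (L / l) * l ^ 2 by field_simp, Real.sqrt_mul (by positivity),
      Real.sqrt_sq hl0.le]
  have huv : u * v = L := by
    rw [hvu, ← mul_assoc, hu, Real.mul_self_sqrt (by positivity)]
    field_simp
  have hue : Real.exp (l / 4) ≤ u := by
    apply Real.le_sqrt_of_sq_le
    rw [le_div_iff₀ hl0, hLexp]
    have e1 : Real.exp (l / 4) ^ 2 = Real.exp (l / 2) := by
      rw [← Real.exp_nat_mul]; congr 1; push_cast; ring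
    have e2 : Real.exp l = Real.exp (l / 4) ^ 2 * Real.exp (l / 4) ^ 2 := by
      rw [e1, ← Real.exp_add]; congr 1; ring
    rw [e2]
    have e3 := Real.add_one_le_exp (l / 4)
    gcongr
    nlinarith
  have hu26 : 26 ≤ u := by linarith [Real.add_one_le_exp (l / 4)]
  have hv2600 : 2600 ≤ v := by rw [hvu]; nlinarith
  have hW : Wp n = Real.exp (v / 1024) := by
    rw [Wp]; congr 1; norm_num; ring
  have hk : kp n = u / 32 := by
    rw [kp]; norm_num; ring
  have hlogW : Real.log (Wp n) = v / 1024 := by rw [hW, Real.log_exp]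
  have hvL : v ≤ L := by rw [← huv]; nlinarith
  refine ⟨by rw [hW]; linarith [Real.add_one_le_exp (v / 1024)], ⌊256 * u⌋₊, ?_, ?_⟩
  · intro T hT hT2
    set r := ⌊256 * u⌋₊ with hr
    have hr1 : 128 * u ≤ r := by linarith [Nat.lt_floor_add_one (256 * u)]
    have hr0 : (0 : ℝ) < r := by linarith
    rw [hlogW] at hT2
    have hratio : Real.exp 1 * T / r ≤ Real.exp (-(l / 64)) := by
      rw [div_le_iff₀ hr0]
      refine (sq_le_sq₀ (by positivity) (by positivity)).1 ?_
      have he : Real.exp 1 ^ 2 ≤ 8 := by nlinarith [Real.exp_one_lt_d9, Real.exp_pos 1]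
      have e1 : Real.exp (-(l / 64)) ^ 2 = Real.exp (-(l / 32)) := by
        rw [← Real.exp_nat_mul]; congr 1; push_cast; ring
      have e2 : l ≤ 2048 * (u * Real.exp (-(l / 32))) := by
        have : Real.exp (l / 4) * Real.exp (-(l / 32)) ≤ u * Real.exp (-(l / 32)) := by gcongr
        rw [← Real.exp_add] at this
        linarith [Real.add_one_le_exp (l / 4 + -(l / 32))]
      calc (Real.exp 1 * T) ^ 2 = Real.exp 1 ^ 2 * T ^ 2 := by ring
        _ ≤ 8 * v := by
          refine mul_le_mul he ?_ (by positivity) (by norm_num)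
          linarith
        _ = 8 * u * l := by rw [hvu]; ring
        _ ≤ 8 * u * (2048 * (u * Real.exp (-(l / 32)))) := by gcongr
        _ = Real.exp (-(l / 32)) * (128 * u) ^ 2 := by ring
        _ ≤ Real.exp (-(l / 32)) * (r : ℝ) ^ 2 := by gcongr
        _ = _ := by rw [mul_pow, e1]
    calc T ^ r / r.factorial = (T / r) ^ r * ((r : ℝ) ^ r / r.factorial) := by
          rw [div_pow]; field_simp
      _ ≤ (T / r) ^ r * Real.exp r := by
          gcongr
          exact Real.pow_div_factorial_le_exp _ hr0.le _
      _ = (Real.exp 1 * T / r) ^ r := by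
          rw [mul_div_assoc, mul_pow, ← Real.exp_nat_mul, mul_one, mul_comm]
      _ ≤ Real.exp (-(l / 64)) ^ r := by gcongr
      _ = Real.exp (-(l / 64 * r)) := by rw [← Real.exp_nat_mul]; congr 1; ring
      _ ≤ Real.exp (-(2 * v)) := by
          rw [Real.exp_le_exp, hvu]
          nlinarith
      _ ≤ 1 / (8 * Wp n) := by
          rw [hW, le_div_iff₀ (by positivity), mul_left_comm, ← Real.exp_add]
          have := Real.add_one_le_exp (-(-(2 * v) + v / 1024))
          rw [Real.exp_neg] at this
          have h8 : (8 : ℝ) ≤ (Real.exp (-(2 * v) + v / 1024))⁻¹ := by linarith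
          rw [le_inv_comm₀ (by norm_num) (by positivity)] at h8
          linarith
  · set r := ⌊256 * u⌋₊ with hr
    have hr1 : (r : ℝ) ≤ 256 * u := Nat.floor_le (by positivity)
    have e1 : (r : ℝ) * v ≤ 256 * L := by
      rw [← huv, ← mul_assoc]
      exact mul_le_mul_of_nonneg_right hr1 (by positivity)
    rw [Real.rpow_def_of_pos hn, ← hLdef, hW, hk, ← Real.exp_nat_mul, ← Real.exp_mul, mul_assoc,
      ← Real.exp_add]
    have e2 : v / 1024 * (u / 32) = L / 32768 := by rw [← huv]; ring
    have h6 : (6 : ℝ) ≤ Real.exp (L / 8) := by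
      linarith [Real.add_one_le_exp (L / 8)]
    refine (mul_le_mul_of_nonneg_right h6 (by positivity)).trans ?_
    rw [← Real.exp_add, Real.exp_le_exp, e2]
    push_cast
    linarith

lemma card_sieve_bounds {n : ℕ} (hL : 0 < Real.log n) (hl : 100 ≤ Real.log (Real.log n))
    {I : Finset ℕ} (hI : ∀ D : ℕ, Odd D → |((I.filter (D ∣ ·)).card : ℝ) - (n : ℝ) / D| ≤ 1)
    {S : Set ℕ} (hS : S ⊆ primesLe' n) (hk : (S.ncard : ℝ) < kp n) {T : Set ℕ}
    (hT : ∀ m, m ∈ T ↔ m ∈ I ∧ ∀ p ∈ primesLe' n, (p ∣ m ↔ p ∈ S)) :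
    (∀ p' : ℕ, p'.Prime → Wp n < (p' : ℝ) → (p' : ℝ) ≤ (n : ℝ) ^ ((1 : ℝ) / 3) →
      ((T ∩ {m : ℕ | p' ∣ m}).ncard : ℝ) ≤ 2 * (T.ncard : ℝ) / (p' : ℝ)) ∧
    ∀ p' : ℕ, p'.Prime → (n : ℝ) ^ ((1 : ℝ) / 3) < (p' : ℝ) →
      ((T ∩ {m : ℕ | p' ∣ m}).ncard : ℝ) ≤ 2 * (n : ℝ) ^ ((2 : ℝ) / 3) := by
  classical
  obtain ⟨hW2, r, hr, hbig⟩ := exists_sieve_level hL hl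
  have hn : (0 : ℝ) < n := by
    rcases Nat.eq_zero_or_pos n with rfl | h
    · simp at hL
    · exact_mod_cast h
  have hpow : (n : ℝ) ^ ((1 : ℝ) / 3) * (n : ℝ) ^ ((2 : ℝ) / 3) = n := by
    rw [← Real.rpow_add hn]; norm_num
  have hW0 : 0 < Wp n := by linarith
  refine ⟨fun p' hp' hWp' hp'n => ?_, fun p' hp' hp'n => ?_⟩
  · set K := ⌊Wp n⌋₊ with hK
    have hKW : (K : ℝ) ≤ Wp n := Nat.floor_le hW0.le
    have hK2 : 2 ≤ K := Nat.le_floor (by exact_mod_cast hW2.le)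
    have hmemP : ∀ p, p ∈ primesLe' n ↔ p.Prime ∧ p ≤ K ∧ p ≠ 2 := by
      intro p
      simp only [primesLe', primesLe, Set.mem_sdiff, Set.mem_ofPred_eq, Set.mem_singleton_iff, hK,
        Nat.le_floor_iff hW0.le, and_assoc]
    have hfinP : (primesLe' n).Finite :=
      (Set.finite_Iic K).subset fun p hp => ((hmemP p).1 hp).2.1
    obtain ⟨P, hP⟩ := hfinP.exists_finset
    obtain ⟨R, hR⟩ := (hfinP.subset hS).exists_finset
    have hRP : R ⊆ P := fun p hp => (hP p).2 (hS ((hR p).1 hp))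
    have hPodd : ∀ p ∈ P, p.Prime ∧ Odd p := fun p hp => by
      have h := (hmemP p).1 ((hP p).1 hp)
      exact ⟨h.1, h.1.odd_of_ne_two h.2.2⟩
    have hPK : ∀ p ∈ P, p.Prime ∧ p ≤ K := fun p hp => by
      have h := (hmemP p).1 ((hP p).1 hp)
      exact ⟨h.1, h.2.1⟩
    have hp'P : p' ∉ P := fun h => by
      have : (p' : ℝ) ≤ K := by exact_mod_cast (hPK p' h).2
      linarith
    have hp'odd : Odd p' := hp'.odd_of_ne_two fun h => by
      rw [h] at hWp'
      push_cast at hWp'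
      linarith
    have hp'0 : (0 : ℝ) < p' := by linarith
    set A := P \ R with hA
    have hAP : A ⊆ P := Finset.sdiff_subset
    have hTI : ∀ m, m ∈ T ↔ m ∈ I ∧ (∀ p ∈ R, p ∣ m) ∧ ∀ p ∈ A, ¬ p ∣ m := by
      intro m
      rw [hT m]
      refine and_congr_right fun _ => ⟨fun h => ⟨fun p hp => ?_, fun p hp hd => ?_⟩,
        fun h p hp => ⟨fun hd => ?_, fun hpS => h.1 p ((hR p).2 hpS)⟩⟩
      · exact (h p ((hP p).1 (hRP hp))).2 ((hR p).1 hp)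
      · have hp2 := Finset.mem_sdiff.1 hp
        exact hp2.2 ((hR p).2 ((h p ((hP p).1 hp2.1)).1 hd))
      · by_contra hpS
        exact h.2 p (Finset.mem_sdiff.2 ⟨(hP p).2 hp, fun h => hpS ((hR p).1 h)⟩) hd
    have hT1 : T.ncard = (I.filter fun m => (∀ p ∈ R, p ∣ m) ∧ ∀ p ∈ A, ¬ p ∣ m).card := by
      rw [← Set.ncard_coe_finset]
      congr 1
      ext m
      simp [hTI]
    have hT2 : (T ∩ {m : ℕ | p' ∣ m}).ncard =
        (I.filter fun m => (∀ p ∈ insert p' R, p ∣ m) ∧ ∀ p ∈ A, ¬ p ∣ m).card := by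
      rw [← Set.ncard_coe_finset]
      congr 1
      ext m
      simp only [Set.mem_inter_iff, Set.mem_ofPred_eq, hTI, Finset.coe_filter,
        Finset.forall_mem_insert]
      tauto
    have hc1 := abs_card_sieve_sub_le hI (fun p hp => hPodd p (hRP hp))
      (fun p hp => hPodd p (hAP hp)) (Finset.disjoint_sdiff (s := R) (t := P)) r
    have hc2 := abs_card_sieve_sub_le hI (R := insert p' R) (A := A)
      (fun p hp => by
        rcases Finset.mem_insert.1 hp with rfl | h
        exacts [⟨hp', hp'odd⟩, hPodd p (hRP h)])
      (fun p hp => hPodd p (hAP hp))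
      (Finset.disjoint_insert_left.2 ⟨fun h => hp'P (hAP h), Finset.disjoint_sdiff⟩) r
    rw [← hT1] at hc1
    rw [← hT2, Finset.prod_insert fun h => hp'P (hRP h)] at hc2
    set s : ℝ := ((∏ p ∈ R, p : ℕ) : ℝ) with hs
    set e := elemSymm A (fun p => (1 : ℝ) / p) r with he
    set F := ∑ j ∈ Finset.range r, (-1) ^ j * elemSymm A (fun p => (1 : ℝ) / p) j with hF
    set D : ℝ := ((A.card : ℝ) + 1) ^ r with hD
    rw [Nat.cast_mul, ← hs] at hc2
    have hs0 : 0 < s := by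
      rw [hs, Nat.cast_pos]
      exact Finset.prod_pos fun p hp => (hPK p (hRP hp)).1.pos
    have hsW : s ≤ Wp n ^ kp n := by
      have h1 : s ≤ Wp n ^ R.card := by
        rw [hs, Nat.cast_prod]
        refine (Finset.prod_le_prod (fun p _ => Nat.cast_nonneg p) (g := fun _ => Wp n)
          fun p hp => ?_).trans_eq (Finset.prod_const _)
        exact le_trans (by exact_mod_cast (hPK p (hRP hp)).2) hKW
      have h2 : S.ncard = R.card := by
        rw [← Set.ncard_coe_finset]
        congr 1
        ext m
        simp [hR]
      rw [h2] at hk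
      refine h1.trans ?_
      rw [← Real.rpow_natCast]
      exact Real.rpow_le_rpow_of_exponent_le (by linarith) hk.le
    have hAK : A ⊆ Finset.Icc 2 K := fun p hp => by
      have h := hPK p (hAP hp)
      exact Finset.mem_Icc.2 ⟨h.1.two_le, h.2⟩
    have hDW : D ≤ Wp n ^ r := by
      have h := Finset.card_le_card hAK
      rw [Nat.card_Icc] at h
      have h' : ((A.card + 1 : ℕ) : ℝ) ≤ K := by exact_mod_cast (by omega)
      push_cast at h'
      exact pow_le_pow_left₀ (by positivity) (h'.trans hKW) r
    have hD0 : 0 ≤ D := by positivity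
    have hx0 : ∀ p ∈ A, (0 : ℝ) ≤ 1 / p := fun p _ => by positivity
    have hx1 : ∀ p ∈ A, (1 : ℝ) / p ≤ 1 := fun p hp => by
      have h1 : (1 : ℝ) ≤ p := by exact_mod_cast (hPK p (hAP hp)).1.one_le
      exact div_le_one_of_le₀ h1 (by linarith)
    have heW : e ≤ 1 / (8 * Wp n) := by
      refine (elemSymm_le A _ hx0 r).trans (hr _ (Finset.sum_nonneg hx0) ?_)
      refine (sq_sum_one_div_primes_le fun p hp => hPK p (hAP hp)).trans ?_
      have hlog : Real.log K ≤ Real.log (Wp n) :=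
        Real.log_le_log (by exact_mod_cast (by omega)) hKW
      linarith
    have he0 : 0 ≤ e := elemSymm_nonneg hx0 r
    have hV : 1 / Wp n - e ≤ F := by
      have h1 := (abs_le.1 (abs_prod_one_sub_sub_le A _ hx0 hx1 r)).2
      have h2 := inv_le_prod_one_sub_inv (by omega) hAK
      have h3 : 1 / Wp n ≤ 1 / K := one_div_le_one_div_of_le (by exact_mod_cast (by omega)) hKW
      linarith
    set Y : ℝ := n / (p' * s) with hY
    have hXY : (n : ℝ) / s = p' * Y := by rw [hY]; field_simp
    have hY0 : 0 < Y := by positivity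
    have hDY : 6 * D * Wp n ≤ Y := by
      rw [hY, le_div_iff₀ (by positivity)]
      calc 6 * D * Wp n * (p' * s)
          ≤ 6 * Wp n ^ r * Wp n * ((n : ℝ) ^ ((1 : ℝ) / 3) * Wp n ^ kp n) := by gcongr
        _ = (n : ℝ) ^ ((1 : ℝ) / 3) * (6 * Wp n ^ (r + 1) * Wp n ^ kp n) := by ring
        _ ≤ (n : ℝ) ^ ((1 : ℝ) / 3) * (n : ℝ) ^ ((2 : ℝ) / 3) := by gcongr
        _ = n := hpow
    have hDY' : 3 * D ≤ Y * (1 / (2 * Wp n)) := by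
      rw [mul_one_div, le_div_iff₀ (by positivity)]
      linarith
    have hF3 : 1 / (2 * Wp n) ≤ F - 3 * e := by
      have e1 : 1 / (2 * Wp n) = 4 * (1 / (8 * Wp n)) := by field_simp; norm_num
      have e2 : 1 / Wp n = 8 * (1 / (8 * Wp n)) := by field_simp
      linarith
    have hkey : 3 * D ≤ Y * (F - 3 * e) :=
      hDY'.trans (mul_le_mul_of_nonneg_left hF3 hY0.le)
    rw [hXY] at hc1
    have h1 := (abs_le.1 hc1).1
    have h2 := mul_le_mul_of_nonneg_left (abs_le.1 hc2).2 hp'0.le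
    have h3 := mul_le_mul_of_nonneg_left hkey hp'0.le
    have h4 : 1 * D ≤ p' * D := mul_le_mul_of_nonneg_right (by linarith) hD0
    rw [le_div_iff₀ hp'0]
    linarith
  · have hodd : Odd p' := hp'.odd_of_ne_two fun h => by
      have h8 : (8 : ℝ) ≤ n := by
        rw [← Real.log_le_log_iff (by norm_num) hn]
        have e1 := Real.log_le_sub_one_of_pos hL
        have e2 := Real.log_le_sub_one_of_pos (show (0 : ℝ) < 8 by norm_num)
        linarith
      have h2 : (2 : ℝ) ≤ (n : ℝ) ^ ((1 : ℝ) / 3) := by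
        refine le_trans (le_of_eq ?_) (Real.rpow_le_rpow (by norm_num) h8 (by norm_num))
        rw [show (8 : ℝ) = 2 ^ (3 : ℝ) by norm_num, ← Real.rpow_mul (by norm_num)]
        norm_num
      rw [h] at hp'n
      push_cast at hp'n
      linarith
    have hp'0 : (0 : ℝ) < p' := by exact_mod_cast hp'.pos
    have hle : (T ∩ {m : ℕ | p' ∣ m}).ncard ≤ (I.filter (p' ∣ ·)).card := by
      rw [← Set.ncard_coe_finset]
      refine Set.ncard_le_ncard (fun m hm => ?_) (Finset.finite_toSet _)
      exact Finset.mem_coe.2 (Finset.mem_filter.2 ⟨((hT m).1 hm.1).1, hm.2⟩)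
    have hle' : ((T ∩ {m : ℕ | p' ∣ m}).ncard : ℝ) ≤ (I.filter (p' ∣ ·)).card := by
      exact_mod_cast hle
    have h1 := (abs_le.1 (hI p' hodd)).2
    have h2 : (n : ℝ) / p' ≤ (n : ℝ) ^ ((2 : ℝ) / 3) := by
      rw [div_le_iff₀ hp'0]
      calc (n : ℝ) = (n : ℝ) ^ ((2 : ℝ) / 3) * (n : ℝ) ^ ((1 : ℝ) / 3) := by
            rw [mul_comm, hpow]
        _ ≤ _ := by gcongr
    have h3 : 1 ≤ (n : ℝ) ^ ((2 : ℝ) / 3) :=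
      Real.one_le_rpow (by exact_mod_cast (Nat.cast_pos.1 hn)) (by norm_num)
    linarith

/-- For all sufficiently large `n` and `S ⊆ 𝒫'_W` with `|S| < k`: for primes
`W < p' ≤ n^{1/3}`, `|B_S ∩ {m : p'|m}| ≤ 2|B_S|/p'` and `|C_S ∩ {m : p'|m}| ≤ 2|C_S|/p'`;
and for primes `p' > n^{1/3}`, both cardinalities are at most `2n^{2/3}`. -/
theorem BSet_CSet_prime_division :
    ∃ N : ℕ, ∀ n : ℕ, N ≤ n → ∀ S : Set ℕ, S ⊆ primesLe' n → (S.ncard : ℝ) < kp n →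
      (∀ p' : ℕ, p'.Prime → Wp n < (p' : ℝ) → (p' : ℝ) ≤ (n : ℝ) ^ ((1 : ℝ) / 3) →
        ((BSet n S ∩ {m : ℕ | p' ∣ m}).ncard : ℝ) ≤ 2 * ((BSet n S).ncard : ℝ) / (p' : ℝ) ∧
        ((CSet n S ∩ {m : ℕ | p' ∣ m}).ncard : ℝ) ≤ 2 * ((CSet n S).ncard : ℝ) / (p' : ℝ)) ∧
      (∀ p' : ℕ, p'.Prime → (n : ℝ) ^ ((1 : ℝ) / 3) < (p' : ℝ) →
        ((BSet n S ∩ {m : ℕ | p' ∣ m}).ncard : ℝ) ≤ 2 * (n : ℝ) ^ ((2 : ℝ) / 3) ∧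
        ((CSet n S ∩ {m : ℕ | p' ∣ m}).ncard : ℝ) ≤ 2 * (n : ℝ) ^ ((2 : ℝ) / 3)) := by
  refine ⟨⌈Real.exp (Real.exp 100)⌉₊, fun n hn S hS hk => ?_⟩
  have hn' : Real.exp (Real.exp 100) ≤ n := Nat.ceil_le.1 hn
  have hlog : Real.exp 100 ≤ Real.log n := by
    rw [← Real.log_exp (Real.exp 100)]
    exact Real.log_le_log (Real.exp_pos _) hn'
  have hL : 0 < Real.log n := (Real.exp_pos _).trans_le hlog
  have hl : 100 ≤ Real.log (Real.log n) := by
    rw [← Real.log_exp 100]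
    exact Real.log_le_log (Real.exp_pos _) hlog
  have hB := card_sieve_bounds hL hl (fun D _ => abs_card_Icc_filter_dvd_sub_le n D) hS hk
    (T := BSet n S) (by simp [BSet, and_assoc])
  have hC := card_sieve_bounds hL hl (abs_card_odd_filter_dvd_sub_le n) hS hk
    (T := CSet n S) (by simp [CSet, oddSet, and_comm])
  exact ⟨fun p' hp' h1 h2 => ⟨hB.1 p' hp' h1 h2, hC.1 p' hp' h1 h2⟩,
    fun p' hp' h => ⟨hB.2 p' hp' h, hC.2 p' hp' h⟩⟩
end

section
/- There exists a constant δ > 0 such that for all sufficiently large n there exist functions φ₁ : [n] → 𝒨 and φ₂ : [n]_o → 𝒨 with the following properties: (1) φ₁(m₁) = ∗ for all m₁ ∈ B_{≥k} and φ₂(m₂) = ∗ for all m₂ ∈ C_{≥k}; (2) if S, T ⊆ 𝒫'_W satisfy S ∩ T ≠ ∅, then x ∈ B_S implies φ₁(x) ≠ T and y ∈ C_T implies φ₂(y) ≠ S; (3) for all S₁, S₂ ⊆ 𝒫'_W with |S₁|, |S₂| < k, the quantity β_{S₁,S₂} := #{m₁ ∈ B_{S₁} : φ₁(m₁) = S₂}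 equals #{m₂ ∈ C_{S₂} : φ₂(m₂) = S₁}; (4) for all such S₁, S₂ with S₁ ∩ S₂ = ∅, β_{S₁,S₂} lies between (1 − ε) and (1 + ε) times n·∏_{p ∈ S₁} p^{−1}·∏_{p ∈ S₂} p^{−1}·∏_{p ∈ 𝒫'_W \ (S₁ ∪ S₂)} (1 − 2p^{−1}), where ε = exp(−δ·(log n · log log n)^{1/2}); (5) #{m₁ ∈ [n] : φ₁(m₁) = ∗} ≤ 2α^{1/2}·n; (6) #{m₂ ∈ [n]_o : φ₂(m₂) = ∗} ≤ 2α^{1/2}·n. -/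
open Real Filter

/-- `B_{≥k} = [n] \ ⋃_{S ⊆ 𝒫'_W, |S| < k} B_S`. -/
noncomputable def BgeK (n : ℕ) : Set ℕ :=
  {m : ℕ | 1 ≤ m ∧ m ≤ n} \
    ⋃ S ∈ {S : Set ℕ | S ⊆ primesLe' n ∧ (S.ncard : ℝ) < kp n}, BSet n S

/-- `C_{≥k} = [n]_o \ ⋃_{S ⊆ 𝒫'_W, |S| < k} C_S`. -/
noncomputable def CgeK (n : ℕ) : Set ℕ :=
  oddSet n \
    ⋃ S ∈ {S : Set ℕ | S ⊆ primesLe' n ∧ (S.ncard : ℝ) < kp n}, CSet n S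


section Sieve

open Finset

theorem sum_neg_one_pow_card_powerset_le {ι : Type*} [DecidableEq ι] (U : Finset ι) {r : ℕ}
    (hr : Odd r) :
    ∑ T ∈ U.powerset with #T ≤ r, (-1 : ℝ) ^ #T ≤ if U = ∅ then 1 else 0 := by
  rcases U.eq_empty_or_nonempty with rfl | hU
  · simp [filter_singleton]
  rw [if_neg hU.ne_empty]
  obtain ⟨u, hu⟩ : ∃ u, #U = u + 1 := ⟨#U - 1, by have := hU.card_pos; omega⟩
  have h : ∑ T ∈ U.powerset with #T ≤ r, (-1 : ℤ) ^ #T = (-1) ^ r * u.choose r := by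
    rw [sum_filter, sum_powerset_apply_card (fun j ↦ if j ≤ r then (-1 : ℤ) ^ j else 0), hu,
      ← Int.alternating_sum_range_choose_eq_choose]
    simp only [smul_ite, smul_zero, ← sum_filter, nsmul_eq_mul, mul_comm]
    rw [← sum_filter_of_ne (s := range (r + 1)) (p := fun j ↦ j < u + 1 + 1)]
    · refine sum_congr ?_ fun _ _ ↦ rfl
      ext j
      simp
      omega
    · intro j _ hj
      by_contra h
      exact hj (by rw [Nat.choose_eq_zero_of_lt (by omega)]; simp)
  have h' : ∑ T ∈ U.powerset with #T ≤ r, (-1 : ℝ) ^ #T = (-1) ^ r * u.choose r := by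
    exact_mod_cast h
  rw [h', hr.neg_one_pow]
  simp

/-- Brun's pure sieve (lower bound): the number of elements of `A` whose set of divisors in `P`
is exactly `S`. -/
theorem brun_sieve_lower_bound {A P S : Finset ℕ} (hS : S ⊆ P) {r : ℕ} (hr : Odd r) {c : ℝ}
    (hc : 0 ≤ c)
    (hA : ∀ T ⊆ P, |(#{m ∈ A | ∀ p ∈ T, p ∣ m} : ℝ) - c * ∏ p ∈ T, (p : ℝ)⁻¹| ≤ 1) :
    c * (∏ p ∈ S, (p : ℝ)⁻¹) * (∏ p ∈ P \ S, (1 - (p : ℝ)⁻¹)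
        - ∑ T ∈ P.powerset with r < #T, ∏ p ∈ T, (p : ℝ)⁻¹)
      - #{T ∈ P.powerset | #T ≤ r} ≤ #{m ∈ A | {p ∈ P | p ∣ m} = S} := by
  classical
  set Q := P \ S with hQ
  set F := {T ∈ Q.powerset | #T ≤ r} with hF
  have hFP : #F ≤ #{T ∈ P.powerset | #T ≤ r} :=
    card_le_card (filter_subset_filter _ (powerset_mono.2 sdiff_subset))
  have hQS : ∀ T ∈ Q.powerset, T ⊆ P ∧ Disjoint S T := by
    intro T hT
    rw [mem_powerset, hQ, subset_sdiff] at hT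
    exact ⟨hT.1, hT.2.symm⟩
  -- the pointwise inequality summed over `A`
  have h1 : ∑ T ∈ F, (-1 : ℝ) ^ #T * #{m ∈ A | ∀ p ∈ S ∪ T, p ∣ m}
      ≤ #{m ∈ A | {p ∈ P | p ∣ m} = S} := by
    have e1 : (#{m ∈ A | {p ∈ P | p ∣ m} = S} : ℝ)
        = ∑ m ∈ A with ∀ p ∈ S, p ∣ m, if {p ∈ Q | p ∣ m} = ∅ then 1 else 0 := by
      rw [← sum_filter, filter_filter, sum_const, nsmul_eq_mul, mul_one]
      congr 2
      refine filter_congr fun m _ ↦ ?_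
      simp only [Finset.ext_iff, mem_filter, hQ, Finset.mem_sdiff, notMem_empty, iff_false, not_and]
      constructor
      · intro h
        exact ⟨fun p hp ↦ ((h p).2 hp).2, fun p hp hd ↦ hp.2 ((h p).1 ⟨hp.1, hd⟩)⟩
      · rintro ⟨h, h'⟩ p
        exact ⟨fun hp ↦ by_contra fun hn ↦ h' p ⟨hp.1, hn⟩ hp.2, fun hp ↦ ⟨hS hp, h p hp⟩⟩
    have e2 : ∑ T ∈ F, (-1 : ℝ) ^ #T * #{m ∈ A | ∀ p ∈ S ∪ T, p ∣ m}
        = ∑ m ∈ A with ∀ p ∈ S, p ∣ m,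
            ∑ T ∈ ({p ∈ Q | p ∣ m} : Finset ℕ).powerset with #T ≤ r, (-1 : ℝ) ^ #T := by
      have : ∀ T ∈ F, (-1 : ℝ) ^ #T * #{m ∈ A | ∀ p ∈ S ∪ T, p ∣ m}
          = ∑ m ∈ A with ∀ p ∈ S, p ∣ m, if ∀ p ∈ T, p ∣ m then (-1 : ℝ) ^ #T else 0 := by
        intro T _
        have e3 : ({m ∈ A | ∀ p ∈ S ∪ T, p ∣ m} : Finset ℕ)
            = {m ∈ A | (∀ p ∈ S, p ∣ m) ∧ ∀ p ∈ T, p ∣ m} :=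
          filter_congr fun m _ ↦ forall_mem_union
        rw [← sum_filter, filter_filter, e3, sum_const, nsmul_eq_mul, mul_comm]
      rw [sum_congr rfl this, sum_comm]
      refine sum_congr rfl fun m _ ↦ ?_
      rw [← sum_filter]
      refine sum_congr ?_ fun _ _ ↦ rfl
      ext T
      rw [mem_filter, mem_filter, mem_filter, mem_powerset, mem_powerset]
      constructor
      · rintro ⟨⟨hTQ, hTr⟩, hT⟩
        exact ⟨fun p hp ↦ mem_filter.2 ⟨hTQ hp, hT p hp⟩, hTr⟩
      · rintro ⟨hT, hTr⟩
        exact ⟨⟨fun p hp ↦ (mem_filter.1 (hT hp)).1, hTr⟩, fun p hp ↦ (mem_filter.1 (hT hp)).2⟩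
    rw [e1, e2]
    exact sum_le_sum fun m _ ↦ sum_neg_one_pow_card_powerset_le _ hr
  -- the main term
  have h2 : c * (∏ p ∈ S, (p : ℝ)⁻¹) * (∑ T ∈ F, (-1 : ℝ) ^ #T * ∏ p ∈ T, (p : ℝ)⁻¹) - #F
      ≤ ∑ T ∈ F, (-1 : ℝ) ^ #T * #{m ∈ A | ∀ p ∈ S ∪ T, p ∣ m} := by
    rw [mul_sum, ← nsmul_one (#F), ← sum_const, ← sum_sub_distrib]
    refine sum_le_sum fun T hT ↦ ?_
    have hT' := hQS T (mem_filter.1 hT).1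
    have := abs_le.1 (hA (S ∪ T) (union_subset hS hT'.1))
    rw [prod_union hT'.2] at this
    rcases neg_one_pow_eq_or ℝ #T with h | h <;> rw [h] <;> linarith
  have h3 : ∏ p ∈ Q, (1 - (p : ℝ)⁻¹) - ∑ T ∈ P.powerset with r < #T, ∏ p ∈ T, (p : ℝ)⁻¹
      ≤ ∑ T ∈ F, (-1 : ℝ) ^ #T * ∏ p ∈ T, (p : ℝ)⁻¹ := by
    have e : ∏ p ∈ Q, (1 - (p : ℝ)⁻¹)
        = ∑ T ∈ Q.powerset, (-1 : ℝ) ^ #T * ∏ p ∈ T, (p : ℝ)⁻¹ := by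
      simp_rw [sub_eq_add_neg, prod_one_add, prod_neg]
    have h4 : ∑ T ∈ Q.powerset with ¬ #T ≤ r, (-1 : ℝ) ^ #T * ∏ p ∈ T, (p : ℝ)⁻¹
        ≤ ∑ T ∈ P.powerset with r < #T, ∏ p ∈ T, (p : ℝ)⁻¹ := by
      have hpos : ∀ T : Finset ℕ, 0 ≤ ∏ p ∈ T, (p : ℝ)⁻¹ := fun T ↦
        prod_nonneg fun p _ ↦ by positivity
      calc _ ≤ ∑ T ∈ Q.powerset with ¬ #T ≤ r, ∏ p ∈ T, (p : ℝ)⁻¹ := by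
            refine sum_le_sum fun T _ ↦ ?_
            rcases neg_one_pow_eq_or ℝ #T with h | h <;> rw [h] <;> linarith [hpos T]
        _ ≤ _ := by
            simp only [not_le]
            exact sum_le_sum_of_subset_of_nonneg
              (filter_subset_filter _ (powerset_mono.2 sdiff_subset)) fun T _ _ ↦ hpos T
    rw [e, ← sum_filter_add_sum_filter_not _ (fun T : Finset ℕ ↦ #T ≤ r)]
    linarith
  have h5 := mul_le_mul_of_nonneg_left h3
    (mul_nonneg hc (prod_nonneg fun p (_ : p ∈ S) ↦ by positivity : 0 ≤ ∏ p ∈ S, (p : ℝ)⁻¹))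
  have h6 : (#F : ℝ) ≤ #{T ∈ P.powerset | #T ≤ r} := by exact_mod_cast hFP
  linarith

/-- Rankin's bound for the terms of large degree in `∏ (1 + x i)`. -/
theorem sum_powerset_prod_le_exp {ι : Type*} {P : Finset ι} {x : ι → ℝ} (hx : ∀ i, 0 ≤ x i)
    {z k : ℝ} (hz : 1 ≤ z) (F : Finset (Finset ι)) (hF : F ⊆ P.powerset)
    (hk : ∀ T ∈ F, k ≤ #T) :
    ∑ T ∈ F, ∏ i ∈ T, x i ≤ exp (z * ∑ i ∈ P, x i - k * log z) := by
  classical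
  have hz0 : 0 < z := by linarith
  have hnn : ∀ T : Finset ι, 0 ≤ ∏ i ∈ T, z * x i := fun T ↦
    prod_nonneg fun i _ ↦ mul_nonneg hz0.le (hx i)
  calc ∑ T ∈ F, ∏ i ∈ T, x i ≤ ∑ T ∈ F, exp (-(k * log z)) * ∏ i ∈ T, z * x i := by
        refine sum_le_sum fun T hT ↦ ?_
        have h0 : 0 ≤ ∏ i ∈ T, x i := prod_nonneg fun i _ ↦ hx i
        rw [prod_mul_distrib, prod_const, ← mul_assoc]
        refine le_mul_of_one_le_left h0 ?_
        rw [← exp_log hz0, ← exp_nat_mul, ← exp_add, one_le_exp_iff, log_exp]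
        nlinarith [hk T hT, log_nonneg hz]
    _ ≤ ∑ T ∈ P.powerset, exp (-(k * log z)) * ∏ i ∈ T, z * x i :=
        sum_le_sum_of_subset_of_nonneg hF fun T _ _ ↦
          mul_nonneg (exp_pos _).le (hnn T)
    _ = exp (-(k * log z)) * ∏ i ∈ P, (1 + z * x i) := by rw [← mul_sum, prod_one_add]
    _ ≤ exp (-(k * log z)) * exp (∑ i ∈ P, z * x i) := by
        gcongr
        exact prod_one_add_le_exp_sum P fun i ↦ mul_nonneg hz0.le (hx i)
    _ = _ := by rw [← exp_add, ← mul_sum]; ring_nf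

theorem card_filter_card_le_le_exp {ι : Type*} (P : Finset ι) {w : ℝ} (hw : 1 ≤ w)
    (hP : #P ≤ w) (r : ℕ) : (#{T ∈ P.powerset | #T ≤ r} : ℝ) ≤ exp (1 + r * log w) := by
  classical
  have hw0 : 0 < w := by linarith
  calc (#{T ∈ P.powerset | #T ≤ r} : ℝ) = ∑ T ∈ P.powerset with #T ≤ r, 1 := by simp
    _ ≤ ∑ T ∈ P.powerset with #T ≤ r, w ^ r * ∏ i ∈ T, w⁻¹ := by
        refine sum_le_sum fun T hT ↦ ?_
        rw [prod_const, inv_pow, ← div_eq_mul_inv, one_le_div (by positivity)]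
        exact pow_le_pow_right₀ hw (mem_filter.1 hT).2
    _ ≤ ∑ T ∈ P.powerset, w ^ r * ∏ i ∈ T, w⁻¹ :=
        sum_le_sum_of_subset_of_nonneg (filter_subset _ _) fun T _ _ ↦
          mul_nonneg (by positivity) (prod_nonneg fun _ _ ↦ by positivity)
    _ = w ^ r * ∏ i ∈ P, (1 + w⁻¹) := by rw [← mul_sum, prod_one_add]
    _ ≤ w ^ r * exp (∑ i ∈ P, w⁻¹) := by
        gcongr
        exact prod_one_add_le_exp_sum P fun _ ↦ (inv_pos.2 hw0).le
    _ ≤ w ^ r * exp 1 := by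
        gcongr
        rw [sum_const, nsmul_eq_mul, ← div_eq_mul_inv]
        exact (div_le_one hw0).2 hP
    _ = _ := by rw [exp_add, exp_nat_mul, exp_log hw0, mul_comm]

end Sieve

section Labelling

open Finset

theorem exists_partial_labelling {α β : Type*} [DecidableEq α] [DecidableEq β] (F : Finset β)
    (c : β → ℕ) (B : Finset α) (h : ∑ l ∈ F, c l ≤ #B) :
    ∃ φ : α → Option β, (∀ x l, φ x = some l → x ∈ B ∧ l ∈ F) ∧
      ∀ l ∈ F, #{x ∈ B | φ x = some l} = c l := by
  induction F using Finset.induction_on generalizing B with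
  | empty => exact ⟨fun _ ↦ none, by simp, by simp⟩
  | insert l F hl ih =>
    rw [sum_insert hl] at h
    obtain ⟨U, hUB, hU⟩ := exists_subset_card_eq (show c l ≤ #B by omega)
    obtain ⟨φ, hφ, hc⟩ := ih (B \ U) (by rw [card_sdiff_of_subset hUB]; omega)
    refine ⟨fun x ↦ if x ∈ U then some l else φ x, ?_, ?_⟩
    · intro x l' hx
      by_cases hxU : x ∈ U
      · simp only [hxU, if_true, Option.some.injEq] at hx
        exact ⟨hUB hxU, by simp [hx]⟩
      · simp only [hxU, if_false] at hx
        exact ⟨(Finset.mem_sdiff.1 (hφ x l' hx).1).1, mem_insert_of_mem (hφ x l' hx).2⟩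
    · intro l' hl'
      rcases eq_or_ne l' l with rfl | hne
      · rw [← hU]
        congr 1
        ext x
        rw [mem_filter]
        by_cases hxU : x ∈ U
        · simp [hxU, hUB hxU]
        · simp only [hxU, if_false, iff_false, not_and]
          exact fun _ hx ↦ hl (hφ x _ hx).2
      · rw [← hc l' ((mem_insert.1 hl').resolve_left hne)]
        congr 1
        ext x
        rw [mem_filter, mem_filter, Finset.mem_sdiff]
        by_cases hxU : x ∈ U
        · simp [hxU, hne.symm]
        · simp [hxU]

/-- Labelling the fibres of `g` over `F` simultaneously, with prescribed numbers of labels. -/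
theorem exists_partial_labelling_fibres {α β : Type*} [DecidableEq α] [DecidableEq β]
    (A : Finset α) (g : α → β) (F : Finset β) (c : β → β → ℕ)
    (h : ∀ S ∈ F, ∑ T ∈ F, c S T ≤ #{x ∈ A | g x = S}) :
    ∃ φ : α → Option β, (∀ x T, φ x = some T → x ∈ A ∧ g x ∈ F ∧ T ∈ F) ∧
      (∀ S ∈ F, ∀ T ∈ F, #{x ∈ A | g x = S ∧ φ x = some T} = c S T) ∧
      #{x ∈ A | φ x = none} + ∑ S ∈ F, ∑ T ∈ F, c S T = #A := by
  have h' : ∀ S, ∃ φ : α → Option β, S ∈ F →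
      (∀ x T, φ x = some T → x ∈ ({x ∈ A | g x = S} : Finset α) ∧ T ∈ F) ∧
      ∀ T ∈ F, #{x ∈ ({x ∈ A | g x = S} : Finset α) | φ x = some T} = c S T := by
    intro S
    by_cases hS : S ∈ F
    · obtain ⟨φ, hφ⟩ := exists_partial_labelling F (c S) _ (h S hS)
      exact ⟨φ, fun _ ↦ hφ⟩
    · exact ⟨fun _ ↦ none, fun hS' ↦ absurd hS' hS⟩
  choose ψ hψ using h'
  let φ : α → Option β := fun x ↦ if g x ∈ F then ψ (g x) x else none
  have hφ1 : ∀ x T, φ x = some T → x ∈ A ∧ g x ∈ F ∧ T ∈ F := by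
    intro x T hx
    by_cases hF : g x ∈ F
    · simp only [φ, hF, if_true] at hx
      have := (hψ _ hF).1 x T hx
      exact ⟨(mem_filter.1 this.1).1, hF, this.2⟩
    · simp [φ, hF] at hx
  have hφ2 : ∀ S ∈ F, ∀ T ∈ F, #{x ∈ A | g x = S ∧ φ x = some T} = c S T := by
    intro S hS T hT
    rw [← (hψ S hS).2 T hT, filter_filter]
    congr 1
    refine filter_congr fun x _ ↦ and_congr_right fun hx ↦ ?_
    simp [φ, hx, hS]
  refine ⟨φ, hφ1, hφ2, ?_⟩
  rw [← card_filter_add_card_filter_not (s := A) (fun x ↦ φ x = none), ← sum_product']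
  congr 1
  rw [card_eq_sum_card_fiberwise (f := fun x ↦ (g x, (φ x).getD (g x))) (t := F ×ˢ F)]
  · refine sum_congr rfl fun ST hST ↦ ?_
    rw [mem_product] at hST
    rw [← hφ2 _ hST.1 _ hST.2, filter_filter]
    congr 1
    refine filter_congr fun x _ ↦ ?_
    rcases hx : φ x with _ | T
    · simp
    · simp [Prod.ext_iff]
  · intro x hx
    have hx' := (mem_filter.1 hx).2
    rcases hT : φ x with _ | T
    · exact absurd hT hx'
    · have := hφ1 x T hT
      simp [hT, this]

end Labelling

section Progression

open Finset

theorem abs_card_filter_forall_prime_dvd_sub_le (n : ℕ) {a : ℕ} (ha : 0 < a) {T : Finset ℕ}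
    (hT : ∀ p ∈ T, p.Prime) (hTa : ∀ p ∈ T, p.Coprime a) :
    |(#{m ∈ (range n).image (fun j ↦ a * j + 1) | ∀ p ∈ T, p ∣ m} : ℝ)
      - n * ∏ p ∈ T, (p : ℝ)⁻¹| ≤ 1 := by
  set d := ∏ p ∈ T, p with hd
  have hdvd : ∀ m, (∀ p ∈ T, p ∣ m) ↔ d ∣ m := fun m ↦
    ⟨fun h ↦ prod_primes_dvd m (fun p hp ↦ (hT p hp).prime) h,
      fun h p hp ↦ (dvd_prod_of_mem _ hp).trans h⟩
  have hd0 : 0 < d := prod_pos fun p hp ↦ (hT p hp).pos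
  have : NeZero d := ⟨hd0.ne'⟩
  have hcop : a.Coprime d := (Nat.Coprime.prod_left hTa).symm
  have hinv : (a : ZMod d) * (a : ZMod d)⁻¹ = 1 := ZMod.coe_mul_inv_eq_one a hcop
  have hcard : #{m ∈ (range n).image (fun j ↦ a * j + 1) | ∀ p ∈ T, p ∣ m}
      = n.count (· ≡ (-(a : ZMod d)⁻¹).val [MOD d]) := by
    have hinj : Function.Injective (fun j ↦ a * j + 1) := fun i j hij ↦ by
      have : a * i + 1 = a * j + 1 := hij
      exact Nat.eq_of_mul_eq_mul_left ha (by omega)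
    rw [Nat.count_eq_card_filter_range, filter_image, card_image_of_injective _ hinj]
    congr 1
    refine filter_congr fun j _ ↦ ?_
    rw [hdvd, ← ZMod.natCast_eq_natCast_iff, ZMod.natCast_val, ZMod.cast_id', id,
      ← ZMod.natCast_eq_zero_iff]
    push_cast
    constructor
    · intro h
      linear_combination (a : ZMod d)⁻¹ * h - (j : ZMod d) * hinv
    · intro h
      rw [h]
      linear_combination -hinv
  have hprod : ∏ p ∈ T, (p : ℝ)⁻¹ = (d : ℝ)⁻¹ := by rw [hd, prod_inv_distrib]; push_cast; rfl
  rw [hcard, Nat.count_modEq_card _ hd0, hprod, ← div_eq_mul_inv]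
  have h1 : ((n / d : ℕ) : ℝ) ≤ n / d := Nat.cast_div_le
  have h2 : (n : ℝ) / d < (n / d : ℕ) + 1 := by
    rw [div_lt_iff₀ (by positivity)]
    exact_mod_cast Nat.lt_mul_of_div_lt (Nat.lt_succ_self _) hd0
  rw [abs_le]
  push_cast
  split_ifs <;> constructor <;> linarith

end Progression

section Density

open Finset

theorem exp_neg_le_prod_one_sub {ι : Type*} {P : Finset ι} {x : ι → ℝ}
    (hx : ∀ i, 0 ≤ x i) (hx' : ∀ i ∈ P, 3 * x i ≤ 2)
    {Q : Finset ι} (hQ : Q ⊆ P) :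
    exp (-(3 * ∑ i ∈ P, x i)) ≤ ∏ i ∈ Q, (1 - x i) := by
  calc exp (-(3 * ∑ i ∈ P, x i)) ≤ exp (∑ i ∈ Q, -(3 * x i)) := by
        rw [exp_le_exp, sum_neg_distrib, neg_le_neg_iff, ← mul_sum]
        exact mul_le_mul_of_nonneg_left
          (sum_le_sum_of_subset_of_nonneg hQ fun i _ _ ↦ hx i) (by norm_num)
    _ = ∏ i ∈ Q, exp (-(3 * x i)) := exp_sum _ _
    _ ≤ ∏ i ∈ Q, (1 - x i) := by
        refine prod_le_prod (fun i _ ↦ (exp_pos _).le) fun i hi ↦ ?_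
        have h2 := hx' i (hQ hi)
        have h0 := hx i
        have hpos : 0 < 1 - x i := by linarith
        rw [← le_log_iff_exp_le hpos]
        refine le_trans ?_ (one_sub_inv_le_log_of_pos hpos)
        have : (1 - x i)⁻¹ ≤ 1 + 3 * x i := by
          rw [inv_le_iff_one_le_mul₀ hpos]
          nlinarith
        linarith

/-- The density of the integer pairs with prescribed disjoint sets `S`, `T` of divisors in `P`,
as a function of the densities `x p`. -/
noncomputable def pairDensity {ι : Type*} [DecidableEq ι] (P : Finset ι) (x : ι → ℝ)
    (S T : Finset ι) : ℝ :=
  if Disjoint S T then (∏ p ∈ S, x p) * (∏ p ∈ T, x p) * ∏ p ∈ P \ (S ∪ T), (1 - 2 * x p) else 0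

variable {ι : Type*} [DecidableEq ι] {P : Finset ι} {x : ι → ℝ}

theorem pairDensity_comm (S T : Finset ι) : pairDensity P x S T = pairDensity P x T S := by
  simp only [pairDensity, disjoint_comm (a := S), union_comm S T,
    mul_comm (∏ p ∈ S, x p) (∏ p ∈ T, x p)]

theorem pairDensity_nonneg (hx : ∀ i, 0 ≤ x i) (hx' : ∀ i ∈ P, 2 * x i ≤ 1) (S T : Finset ι) :
    0 ≤ pairDensity P x S T := by
  unfold pairDensity
  split_ifs
  · exact mul_nonneg (mul_nonneg (prod_nonneg fun i _ ↦ hx i) (prod_nonneg fun i _ ↦ hx i))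
      (prod_nonneg fun i hi ↦ sub_nonneg.2 (hx' i (Finset.mem_sdiff.1 hi).1))
  · exact le_rfl

theorem sum_pairDensity (S : Finset ι) :
    ∑ T ∈ P.powerset, pairDensity P x S T = (∏ p ∈ S, x p) * ∏ p ∈ P \ S, (1 - x p) := by
  have h : ∏ p ∈ P \ S, (1 - x p) = ∏ p ∈ P \ S, (x p + (1 - 2 * x p)) :=
    prod_congr rfl fun p _ ↦ by ring
  rw [h, prod_add, mul_sum]
  simp only [pairDensity]
  rw [← sum_filter]
  refine sum_congr ?_ fun T _ ↦ ?_
  · ext T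
    simp only [mem_filter, mem_powerset, subset_sdiff, disjoint_comm]
  · rw [sdiff_sdiff_left, sup_eq_union, mul_assoc]

theorem sum_prod_mul_prod_one_sub :
    ∑ S ∈ P.powerset, (∏ p ∈ S, x p) * ∏ p ∈ P \ S, (1 - x p) = 1 := by
  rw [← prod_add]
  simp

theorem one_sub_le_sum_pairDensity (hx : ∀ i, 0 ≤ x i) (hx' : ∀ i ∈ P, 2 * x i ≤ 1)
    {F : Finset (Finset ι)} (hF : F ⊆ P.powerset) {τ : ℝ}
    (hτ : ∑ S ∈ P.powerset \ F, ∏ p ∈ S, x p ≤ τ) :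
    1 - 2 * τ ≤ ∑ S ∈ F, ∑ T ∈ F, pairDensity P x S T := by
  have h1 : ∑ S ∈ P.powerset \ F, ∑ T ∈ P.powerset, pairDensity P x S T ≤ τ := by
    refine le_trans (sum_le_sum fun S _ ↦ ?_) hτ
    rw [sum_pairDensity]
    refine mul_le_of_le_one_right (prod_nonneg fun i _ ↦ hx i) (prod_le_one ?_ ?_)
    · intro i hi
      have := hx' i (Finset.mem_sdiff.1 hi).1
      linarith [hx i]
    · intro i _
      linarith [hx i]
  have h2 : ∑ S ∈ F, ∑ T ∈ P.powerset \ F, pairDensity P x S T ≤ τ := by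
    refine le_trans ?_ h1
    rw [sum_comm]
    refine sum_le_sum fun T _ ↦ ?_
    simp only [pairDensity_comm _ T]
    exact sum_le_sum_of_subset_of_nonneg hF fun S _ _ ↦ pairDensity_nonneg hx hx' _ _
  have h3 : ∑ S ∈ P.powerset, ∑ T ∈ P.powerset, pairDensity P x S T = 1 := by
    rw [← sum_prod_mul_prod_one_sub (P := P) (x := x)]
    exact sum_congr rfl fun S _ ↦ sum_pairDensity S
  rw [← sum_sdiff hF] at h3
  have h4 : ∑ S ∈ F, ∑ T ∈ P.powerset, pairDensity P x S T
      = ∑ S ∈ F, ∑ T ∈ P.powerset \ F, pairDensity P x S T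
        + ∑ S ∈ F, ∑ T ∈ F, pairDensity P x S T := by
    rw [← sum_add_distrib]
    exact sum_congr rfl fun S _ ↦ (sum_sdiff hF).symm
  linarith

end Density

section PrimeReciprocals

open Finset

theorem sum_inv_primes_dyadic_le {J : ℕ} (hJ : 0 < J) :
    ∑ p ∈ (Ico (2 ^ J) (2 ^ (J + 1)) : Finset ℕ) with p.Prime, (p : ℝ)⁻¹ ≤ 4 / J := by
  set T := {p ∈ Ico (2 ^ J) (2 ^ (J + 1)) | p.Prime} with hT
  have hmem : ∀ p ∈ T, 2 ^ J ≤ p ∧ p < 2 ^ (J + 1) ∧ p.Prime := by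
    intro p hp
    simpa [hT, and_assoc] using hp
  have h1 : (2 ^ J) ^ #T ≤ 4 ^ (2 ^ (J + 1)) := by
    calc (2 ^ J) ^ #T ≤ ∏ p ∈ T, p := pow_card_le_prod _ _ _ fun p hp ↦ (hmem p hp).1
      _ ≤ primorial (2 ^ (J + 1)) := by
          refine prod_le_prod_of_subset_of_one_le' ?_ fun p hp _ ↦ ?_
          · intro p hp
            have := hmem p hp
            simp [this.2.2, this.2.1.le]
          · simp at hp
            exact hp.2.one_le
      _ ≤ _ := primorial_le_four_pow _
  have h2 : J * #T ≤ 4 * 2 ^ J := by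
    rw [← pow_mul, show 4 = 2 ^ 2 by rfl, ← pow_mul] at h1
    have := (Nat.pow_le_pow_iff_right (by norm_num)).1 h1
    rw [pow_succ] at this
    linarith
  have h2' : (J : ℝ) * #T ≤ 4 * 2 ^ J := by exact_mod_cast h2
  calc ∑ p ∈ T, (p : ℝ)⁻¹ ≤ ∑ p ∈ T, ((2 : ℝ) ^ J)⁻¹ := by
        refine sum_le_sum fun p hp ↦ ?_
        gcongr
        exact_mod_cast (hmem p hp).1
    _ ≤ 4 / J := by
        rw [sum_const, nsmul_eq_mul, ← div_eq_mul_inv, div_le_div_iff₀ (by positivity)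
          (by positivity)]
        linarith

theorem sum_inv_primes_lt_two_pow_le (J : ℕ) :
    ∑ p ∈ range (2 ^ (J + 1)) with p.Prime, (p : ℝ)⁻¹ ≤ 4 * (1 + log J) := by
  have h : ∑ p ∈ range (2 ^ (J + 1)) with p.Prime, (p : ℝ)⁻¹
      ≤ 4 * ∑ j ∈ range J, ((j + 1 : ℕ) : ℝ)⁻¹ := by
    induction J with
    | zero =>
      have : (range 2).filter Nat.Prime = ∅ := by decide
      simp [this]
    | succ J ih =>
      rw [sum_range_succ, mul_add, sum_filter,
        ← sum_range_add_sum_Ico _ (Nat.pow_le_pow_right (by norm_num : 0 < 2) (Nat.le_succ (J + 1))),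
        ← sum_filter, ← sum_filter]
      exact add_le_add ih ((sum_inv_primes_dyadic_le (Nat.succ_pos J)).trans_eq
        (div_eq_mul_inv _ _))
  have h' := harmonic_le_one_add_log J
  rw [harmonic] at h'
  push_cast at h h'
  linarith

end PrimeReciprocals

section Quantitative

open Finset

theorem exp_neg_two_le_quarter : exp (-2) ≤ 1 / 4 := by
  have h1 : (2 : ℝ) ≤ exp 1 := by linarith [add_one_le_exp (1 : ℝ)]
  have h2 : exp 2 = exp 1 * exp 1 := by rw [← exp_add]; norm_num
  rw [exp_neg, one_div]
  gcongr
  nlinarith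

/-- The size conditions under which the sieve is applied: `k`, `y` stand for the threshold `k(n)`
and `log log n`, in terms of which `log n = 1024 k ^ 2 y` and `log W(n) = k y / 32`. -/
structure SieveParameters (n : ℕ) (P : Finset ℕ) (k y : ℝ) : Prop where
  one_le_k : 1 ≤ k
  le_y : 48 ≤ y
  n_eq : (n : ℝ) = exp (1024 * (k ^ 2 * y))
  prime : ∀ p ∈ P, p.Prime
  three_le : ∀ p ∈ P, 3 ≤ p
  le_W : ∀ p ∈ P, (p : ℝ) ≤ exp (k * y / 32)
  sum_inv_le : exp (3 * y / 8) * ∑ p ∈ P, (p : ℝ)⁻¹ ≤ k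

namespace SieveParameters

variable {n : ℕ} {P : Finset ℕ} {k y : ℝ}

theorem le_ky (h : SieveParameters n P k y) : 48 * k ≤ k * y := by
  nlinarith [h.one_le_k, h.le_y]

theorem ky_le (h : SieveParameters n P k y) : k * y ≤ k ^ 2 * y := by
  have := mul_le_mul_of_nonneg_right h.one_le_k
    (mul_nonneg (by linarith [h.one_le_k]) (by linarith [h.le_y]) : 0 ≤ k * y)
  nlinarith

theorem sum_inv_le_k (h : SieveParameters n P k y) : ∑ p ∈ P, (p : ℝ)⁻¹ ≤ k := by
  have h0 : 0 ≤ ∑ p ∈ P, (p : ℝ)⁻¹ := sum_nonneg fun p _ ↦ by positivity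
  exact (le_mul_of_one_le_left h0 (one_le_exp (by linarith [h.le_y]))).trans h.sum_inv_le

theorem inv_le (h : SieveParameters n P k y) {p : ℕ} (hp : p ∈ P) : (p : ℝ)⁻¹ ≤ 1 / 3 := by
  rw [one_div]
  gcongr
  exact_mod_cast h.three_le p hp

theorem card_le (h : SieveParameters n P k y) : (#P : ℝ) ≤ exp (k * y / 32) := by
  have : #P ≤ #(Icc 1 ⌊exp (k * y / 32)⌋₊) := card_le_card fun p hp ↦
    mem_Icc.2 ⟨(h.prime p hp).one_le, Nat.le_floor (h.le_W p hp)⟩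
  rw [Nat.card_Icc, Nat.add_sub_cancel] at this
  exact (Nat.cast_le.2 this).trans (Nat.floor_le (exp_pos _).le)

theorem exp_neg_le_prod_inv (h : SieveParameters n P k y) {S : Finset ℕ} (hS : S ⊆ P)
    (hk : (#S : ℝ) < k) : exp (-(k ^ 2 * y / 32)) ≤ ∏ p ∈ S, (p : ℝ)⁻¹ := by
  have hky : 0 ≤ k * y / 32 := by linarith [h.le_ky, h.one_le_k]
  calc exp (-(k ^ 2 * y / 32)) ≤ exp (-(k * y / 32)) ^ #S := by
        rw [← exp_nat_mul, exp_le_exp]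
        have := mul_le_mul_of_nonneg_right hk.le hky
        nlinarith
    _ = ∏ p ∈ S, exp (-(k * y / 32)) := by rw [prod_const]
    _ ≤ ∏ p ∈ S, (p : ℝ)⁻¹ := by
        refine prod_le_prod (fun _ _ ↦ (exp_pos _).le) fun p hp ↦ ?_
        rw [exp_neg]
        have := (h.prime p (hS hp)).pos
        gcongr
        exact h.le_W p (hS hp)

/-- The contribution of the subsets of `P` with at least `k` elements is negligible. -/
theorem sum_prod_inv_le (h : SieveParameters n P k y) {F : Finset (Finset ℕ)}
    (hF : F ⊆ P.powerset) (hk : ∀ T ∈ F, k ≤ #T) :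
    ∑ T ∈ F, ∏ p ∈ T, (p : ℝ)⁻¹ ≤ exp (k - 3 * (k * y) / 8) := by
  refine (sum_powerset_prod_le_exp (fun p ↦ by positivity)
    (one_le_exp (by linarith [h.le_y] : 0 ≤ 3 * y / 8)) F hF hk).trans ?_
  rw [log_exp, exp_le_exp]
  linarith [h.sum_inv_le]

theorem sieve_lower_bound (h : SieveParameters n P k y) {A S : Finset ℕ} (hS : S ⊆ P)
    (hSk : (#S : ℝ) < k)
    (hA : ∀ T ⊆ P, |(#{m ∈ A | ∀ p ∈ T, p ∣ m} : ℝ) - n * ∏ p ∈ T, (p : ℝ)⁻¹| ≤ 1) :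
    (1 - exp (-(k * y / 4)) / 2) * n * ((∏ p ∈ S, (p : ℝ)⁻¹) * ∏ p ∈ P \ S, (1 - (p : ℝ)⁻¹))
      ≤ #{m ∈ A | {p ∈ P | p ∣ m} = S} := by
  have hk1 := h.one_le_k
  have hky := h.le_ky
  have hkky := h.ky_le
  set r := 2 * ⌈k / 2⌉₊ + 1 with hr
  have hr1 : k ≤ r := by
    have := Nat.le_ceil (k / 2)
    rw [hr]
    push_cast
    linarith
  have hr2 : (r : ℝ) ≤ k + 3 := by
    have := Nat.ceil_lt_add_one (show 0 ≤ k / 2 by linarith)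
    rw [hr]
    push_cast
    linarith
  have hsieve := brun_sieve_lower_bound hS (r := r) ⟨_, rfl⟩ (Nat.cast_nonneg n) hA
  set V := ∏ p ∈ P \ S, (1 - (p : ℝ)⁻¹)
  set D := ∏ p ∈ S, (p : ℝ)⁻¹
  set E := exp (-(k * y / 4)) with hE
  have hV : exp (-(3 * k)) ≤ V := by
    refine le_trans ?_ (exp_neg_le_prod_one_sub (P := P) (x := fun p : ℕ ↦ (p : ℝ)⁻¹)
      (fun p ↦ by positivity) (fun p hp ↦ by linarith [h.inv_le hp]) sdiff_subset)
    rw [exp_le_exp]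
    linarith [h.sum_inv_le_k]
  have hD : exp (-(k ^ 2 * y / 32)) ≤ D := h.exp_neg_le_prod_inv hS hSk
  have hD0 : 0 < D := (exp_pos _).trans_le hD
  have htail : ∑ T ∈ P.powerset with r < #T, ∏ p ∈ T, (p : ℝ)⁻¹ ≤ E / 4 * V := by
    refine (h.sum_prod_inv_le (filter_subset _ _) fun T hT ↦ ?_).trans ?_
    · have : (r : ℝ) < #T := by exact_mod_cast (mem_filter.1 hT).2
      linarith
    · calc exp (k - 3 * (k * y) / 8) ≤ exp (-(k * y / 4)) * exp (-2) * exp (-(3 * k)) := by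
            rw [← exp_add, ← exp_add, exp_le_exp]
            linarith
        _ ≤ E * (1 / 4) * V := by
            gcongr
            exact exp_neg_two_le_quarter
        _ = _ := by ring
  have hcount : (#{T ∈ P.powerset | #T ≤ r} : ℝ) ≤ E / 4 * (n * D * V) := by
    refine (card_filter_card_le_le_exp P (one_le_exp (by linarith)) h.card_le r).trans ?_
    rw [log_exp]
    calc exp (1 + r * (k * y / 32))
        ≤ exp (-(k * y / 4)) * exp (-2) * (exp (1024 * (k ^ 2 * y)) * exp (-(k ^ 2 * y / 32))
          * exp (-(3 * k))) := by
          simp only [← exp_add]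
          rw [exp_le_exp]
          have := mul_le_mul_of_nonneg_right hr2 (by linarith : 0 ≤ k * y / 32)
          nlinarith
      _ ≤ E * (1 / 4) * (n * D * V) := by
          rw [h.n_eq]
          gcongr
          exact exp_neg_two_le_quarter
      _ = _ := by ring
  have hnD : 0 ≤ n * D := by positivity
  nlinarith [mul_le_mul_of_nonneg_left htail hnD]

theorem floor_lower_bound (h : SieveParameters n P k y) {S T : Finset ℕ} (hS : S ⊆ P) (hT : T ⊆ P)
    (hSk : (#S : ℝ) < k) (hTk : (#T : ℝ) < k) :
    (1 - exp (-(k * y / 4))) * (n * pairDensity P (fun p ↦ (p : ℝ)⁻¹) S T)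
      ≤ ⌊(1 - exp (-(k * y / 4)) / 2) * (n * pairDensity P (fun p ↦ (p : ℝ)⁻¹) S T)⌋₊ := by
  by_cases hST : Disjoint S T
  swap
  · simp [pairDensity, hST]
  have hk1 := h.one_le_k
  have hky := h.le_ky
  have hkky := h.ky_le
  set γ := n * pairDensity P (fun p ↦ (p : ℝ)⁻¹) S T with hγ
  have hV : exp (-(6 * k)) ≤ ∏ p ∈ P \ (S ∪ T), (1 - 2 * (p : ℝ)⁻¹) := by
    refine le_trans ?_ (exp_neg_le_prod_one_sub (P := P) (x := fun p : ℕ ↦ 2 * (p : ℝ)⁻¹)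
      (fun p ↦ by positivity) (fun p hp ↦ by linarith [h.inv_le hp]) sdiff_subset)
    rw [exp_le_exp, ← mul_sum]
    linarith [h.sum_inv_le_k]
  have hγ1 : exp (k * y / 4 + 1) ≤ γ := by
    calc exp (k * y / 4 + 1)
        ≤ exp (1024 * (k ^ 2 * y)) * (exp (-(k ^ 2 * y / 32)) * exp (-(k ^ 2 * y / 32))
          * exp (-(6 * k))) := by
          simp only [← exp_add]
          rw [exp_le_exp]
          linarith
      _ ≤ γ := by
          rw [hγ, h.n_eq, pairDensity, if_pos hST]
          gcongr
          · exact h.exp_neg_le_prod_inv hS hSk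
          · exact h.exp_neg_le_prod_inv hT hTk
  have hγ2 : 1 ≤ exp (-(k * y / 4)) / 2 * γ := by
    have h2 : (2 : ℝ) ≤ exp 1 := by linarith [add_one_le_exp (1 : ℝ)]
    have h3 : exp 1 = exp (-(k * y / 4)) * exp (k * y / 4 + 1) := by
      rw [← exp_add]
      ring_nf
    have := mul_le_mul_of_nonneg_left hγ1 (exp_pos (-(k * y / 4))).le
    linarith
  have := Nat.lt_floor_add_one ((1 - exp (-(k * y / 4)) / 2) * γ)
  linarith

end SieveParameters

end Quantitative

section Assignment

open Finset

/-- The elements of `A` whose set of divisors in `P` is exactly `S`. -/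
def exactDivisorSet (A P : Finset ℕ) (S : Set ℕ) : Set ℕ :=
  {m | m ∈ A ∧ ∀ p ∈ P, (p ∣ m ↔ p ∈ S)}

/-- The number of elements with divisor set `S` that receive the label `T`. -/
noncomputable def labelCount (n : ℕ) (P : Finset ℕ) (c : ℝ) (S T : Finset ℕ) : ℕ :=
  ⌊c * (n * pairDensity P (fun p ↦ (p : ℝ)⁻¹) S T)⌋₊

theorem mem_exactDivisorSet_coe {A P S : Finset ℕ} (hS : S ⊆ P) {m : ℕ} :
    m ∈ exactDivisorSet A P S ↔ m ∈ A ∧ ({p ∈ P | p ∣ m} : Finset ℕ) = S := by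
  refine and_congr_right fun _ ↦ ?_
  simp only [Finset.ext_iff, mem_filter, mem_coe]
  exact ⟨fun h p ↦ ⟨fun hp ↦ (h p hp.1).1 hp.2, fun hp ↦ ⟨hS hp, (h p (hS hp)).2 hp⟩⟩,
    fun h p hp ↦ ⟨fun hd ↦ (h p).1 ⟨hp, hd⟩, fun hpS ↦ ((h p).2 hpS).2⟩⟩

theorem SieveParameters.exists_labelling {n : ℕ} {P : Finset ℕ} {k y : ℝ}
    (h : SieveParameters n P k y) {A : Finset ℕ} (hAn : #A = n)
    (hA : ∀ T ⊆ P, |(#{m ∈ A | ∀ p ∈ T, p ∣ m} : ℝ) - n * ∏ p ∈ T, (p : ℝ)⁻¹| ≤ 1) :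
    ∃ φ : ℕ → Option (Set ℕ),
      (∀ m S, φ m = some S → S ⊆ P ∧ (S.ncard : ℝ) < k) ∧
      (∀ m, (∀ S : Set ℕ, S ⊆ P → (S.ncard : ℝ) < k → m ∉ exactDivisorSet A P S) → φ m = none) ∧
      (∀ S T : Set ℕ, S ⊆ P → T ⊆ P → (S ∩ T).Nonempty →
        ∀ m ∈ exactDivisorSet A P S, φ m ≠ some T) ∧
      (∀ S T : Finset ℕ, S ⊆ P → T ⊆ P → (#S : ℝ) < k → (#T : ℝ) < k →
        {m ∈ exactDivisorSet A P S | φ m = some (T : Set ℕ)}.ncard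
          = labelCount n P (1 - exp (-(k * y / 4)) / 2) S T) ∧
      (({m | m ∈ A ∧ φ m = none} : Set ℕ).ncard : ℝ) ≤ 2 * exp (-(k * y / 4)) * n := by
  set E := exp (-(k * y / 4)) with hE
  set x : ℕ → ℝ := fun p ↦ (p : ℝ)⁻¹ with hx
  have hx0 : ∀ p, 0 ≤ x p := fun p ↦ by positivity
  have hx2 : ∀ p ∈ P, 2 * x p ≤ 1 := fun p hp ↦ by linarith [h.inv_le hp]
  have hE1 : E ≤ 1 := by
    rw [hE, exp_le_one_iff]
    linarith [h.le_ky, h.one_le_k]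
  set F : Finset (Finset ℕ) := {S ∈ P.powerset | (#S : ℝ) < k} with hF
  have hFmem : ∀ S, S ∈ F ↔ S ⊆ P ∧ (#S : ℝ) < k := by simp [hF]
  set g : ℕ → Finset ℕ := fun m ↦ {p ∈ P | p ∣ m} with hg
  obtain ⟨φ, hφ, hcard, hnone⟩ := exists_partial_labelling_fibres A g F
    (labelCount n P (1 - E / 2)) (by
      intro S hS
      rw [hFmem] at hS
      have h1 := h.sieve_lower_bound hS.1 hS.2 hA
      rw [← sum_pairDensity (x := x), ← hE] at h1
      have h2 : (∑ T ∈ F, (labelCount n P (1 - E / 2) S T : ℝ))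
          ≤ (1 - E / 2) * n * ∑ T ∈ P.powerset, pairDensity P x S T := by
        rw [mul_sum]
        have h0 : ∀ T, 0 ≤ (1 - E / 2) * (n * pairDensity P x S T) := fun T ↦
          mul_nonneg (by linarith) (mul_nonneg (Nat.cast_nonneg n) (pairDensity_nonneg hx0 hx2 S T))
        refine (sum_le_sum fun T _ ↦ Nat.floor_le (h0 T)).trans ?_
        simp only [mul_assoc]
        exact sum_le_sum_of_subset_of_nonneg (filter_subset _ _) fun T _ _ ↦ h0 T
      exact_mod_cast h2.trans h1)
  have hdisj : ∀ S T : Finset ℕ, ¬ Disjoint S T → ∀ m, g m = S → φ m ≠ some T := by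
    intro S T hST m hm hmT
    obtain ⟨h1, h2, h3⟩ := hφ m T hmT
    have := hcard S (hm ▸ h2) T h3
    rw [labelCount, pairDensity, if_neg hST, mul_zero, mul_zero, Nat.floor_zero, card_eq_zero,
      filter_eq_empty_iff] at this
    exact this h1 ⟨hm, hmT⟩
  refine ⟨fun m ↦ (φ m).map (↑), ?_, ?_, ?_, ?_, ?_⟩
  · intro m S hm
    obtain ⟨T, hT, rfl⟩ := Option.map_eq_some_iff.1 hm
    have := (hFmem T).1 (hφ m T hT).2.2
    rw [Set.ncard_coe_finset]
    exact ⟨coe_subset.2 this.1, this.2⟩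
  · intro m hm
    rcases hT : φ m with _ | T
    · simp [hT]
    · obtain ⟨h1, h2, -⟩ := hφ m T hT
      rw [hFmem] at h2
      exact absurd ((mem_exactDivisorSet_coe h2.1).2 ⟨h1, rfl⟩)
        (hm _ (coe_subset.2 h2.1) (by rw [Set.ncard_coe_finset]; exact h2.2))
  · intro S T hS _ hST m hm hmT
    obtain ⟨S, rfl⟩ := (P.finite_toSet.subset hS).exists_finset_coe
    obtain ⟨T, hT, rfl⟩ := Option.map_eq_some_iff.1 hmT
    refine hdisj S T ?_ m ((mem_exactDivisorSet_coe (coe_subset.1 hS)).1 hm).2 hT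
    rwa [← disjoint_coe, Set.not_disjoint_iff_nonempty_inter]
  · intro S T hS hT hSk hTk
    rw [← hcard S ((hFmem S).2 ⟨hS, hSk⟩) T ((hFmem T).2 ⟨hT, hTk⟩), ← Set.ncard_coe_finset]
    congr 1
    ext m
    simp only [Set.mem_ofPred_eq, mem_exactDivisorSet_coe hS, coe_filter, Option.map_eq_some_iff,
      SetLike.coe_set_eq, exists_eq_right, and_assoc, hg]
  · have h1 : ({m | m ∈ A ∧ (φ m).map (fun T : Finset ℕ ↦ (T : Set ℕ)) = none} : Set ℕ).ncard
        = #{m ∈ A | φ m = none} := by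
      rw [← Set.ncard_coe_finset]
      congr 1
      ext m
      simp
    rw [h1]
    have hτ : ∑ S ∈ P.powerset \ F, ∏ p ∈ S, x p ≤ E / 2 := by
      refine (h.sum_prod_inv_le sdiff_subset fun T hT ↦ ?_).trans ?_
      · rw [Finset.mem_sdiff, hFmem, mem_powerset] at hT
        exact not_lt.1 fun hlt ↦ hT.2 ⟨hT.1, hlt⟩
      · calc exp (k - 3 * (k * y) / 8) ≤ exp (-(k * y / 4)) * exp (-2) := by
              rw [← exp_add, exp_le_exp]
              linarith [h.le_ky, h.one_le_k]
          _ ≤ E / 2 := by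
              have := mul_le_mul_of_nonneg_left exp_neg_two_le_quarter (exp_pos (-(k * y / 4))).le
              linarith [exp_pos (-(k * y / 4))]
    have h2 := one_sub_le_sum_pairDensity hx0 hx2 (filter_subset _ _ : F ⊆ P.powerset) hτ
    have h3 : (1 - E) * (n * (1 - 2 * (E / 2)))
        ≤ ∑ S ∈ F, ∑ T ∈ F, (labelCount n P (1 - E / 2) S T : ℝ) := by
      calc (1 - E) * (n * (1 - 2 * (E / 2)))
          ≤ (1 - E) * (n * ∑ S ∈ F, ∑ T ∈ F, pairDensity P x S T) := by
            have : 0 ≤ 1 - E := by linarith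
            gcongr
        _ = ∑ S ∈ F, ∑ T ∈ F, (1 - E) * (n * pairDensity P x S T) := by
            simp only [mul_sum]
        _ ≤ _ := by
            refine sum_le_sum fun S hS ↦ sum_le_sum fun T hT ↦ ?_
            rw [hFmem] at hS hT
            exact h.floor_lower_bound hS.1 hT.1 hS.2 hT.2
    have h4 : (#{m ∈ A | φ m = none} : ℝ)
        + ∑ S ∈ F, ∑ T ∈ F, (labelCount n P (1 - E / 2) S T : ℝ) = n := by
      rw [hAn] at hnone
      exact_mod_cast hnone
    nlinarith [mul_nonneg (Nat.cast_nonneg (α := ℝ) n) (sq_nonneg E)]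

end Assignment

section Parameters

theorem kp_mul_loglog {n : ℕ} (hy : 0 < log (log n)) :
    kp n * log (log n) = 2 ^ (-5 : ℤ) * √(log n * log (log n)) := by
  have h : log n * log (log n) = log n / log (log n) * log (log n) ^ 2 := by field_simp
  rw [kp, mul_assoc, h, sqrt_mul' _ (sq_nonneg _), sqrt_sq hy.le]

theorem log_eq_kp_sq_mul {n : ℕ} (hL : 0 ≤ log n) (hy : 0 < log (log n)) :
    log n = 1024 * (kp n ^ 2 * log (log n)) := by
  rw [kp, mul_pow, sq_sqrt (div_nonneg hL hy.le)]
  field_simp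
  norm_num

theorem Wp_eq {n : ℕ} (hy : 0 < log (log n)) : Wp n = exp (kp n * log (log n) / 32) := by
  rw [Wp, kp_mul_loglog hy]
  congr 1
  ring

theorem exp_neg_le_ap_rpow {n : ℕ} (hL : 0 < log n) (hy : 1 ≤ log (log n)) (hk : 1 ≤ kp n) :
    exp (-(kp n * log (log n) / 4)) ≤ ap n ^ ((1 : ℝ) / 2) := by
  have h2 : 2 * log (kp n) ≤ log (log n) := by
    have h : log (kp n ^ 2) ≤ log (log n) := by
      refine log_le_log (by positivity) ?_
      rw [log_eq_kp_sq_mul hL.le (by linarith)]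
      nlinarith [sq_nonneg (kp n)]
    rw [log_pow] at h
    exact_mod_cast h
  rw [ap, ← exp_mul, exp_le_exp]
  nlinarith

/-- The finite set of odd primes up to `W(n)`. -/
noncomputable def oddPrimesUpTo (n : ℕ) : Finset ℕ :=
  {p ∈ Finset.range (⌊Wp n⌋₊ + 1) | p.Prime ∧ p ≠ 2}

theorem mem_oddPrimesUpTo {n p : ℕ} :
    p ∈ oddPrimesUpTo n ↔ (p.Prime ∧ (p : ℝ) ≤ Wp n) ∧ p ≠ 2 := by
  rw [oddPrimesUpTo, Finset.mem_filter, Finset.mem_range, Nat.lt_succ_iff,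
    Nat.le_floor_iff (show 0 ≤ Wp n from (exp_pos _).le)]
  tauto

theorem coe_oddPrimesUpTo (n : ℕ) : (oddPrimesUpTo n : Set ℕ) = primesLe' n := by
  ext p
  rw [Finset.mem_coe, mem_oddPrimesUpTo]
  rfl

theorem sum_inv_oddPrimesUpTo_le {n : ℕ} {u : ℝ} (hu : 1 ≤ u) (hW : Wp n = exp u) :
    ∑ p ∈ oddPrimesUpTo n, (p : ℝ)⁻¹ ≤ 4 * (1 + log (3 * u)) := by
  set J := ⌈2 * u⌉₊
  have hJ : 2 * u ≤ J := Nat.le_ceil _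
  have hJ' : (J : ℝ) < 2 * u + 1 := Nat.ceil_lt_add_one (by linarith)
  calc ∑ p ∈ oddPrimesUpTo n, (p : ℝ)⁻¹
      ≤ ∑ p ∈ Finset.range (2 ^ (J + 1)) with p.Prime, (p : ℝ)⁻¹ := by
        refine Finset.sum_le_sum_of_subset_of_nonneg (fun p hp ↦ ?_) fun p _ _ ↦ by positivity
        obtain ⟨⟨hp, hpW⟩, -⟩ := mem_oddPrimesUpTo.1 hp
        rw [Finset.mem_filter, Finset.mem_range]
        refine ⟨?_, hp⟩
        have h1 : (p : ℝ) ≤ 2 ^ J := by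
          rw [hW] at hpW
          refine hpW.trans ?_
          rw [← exp_log (show (0 : ℝ) < 2 by norm_num), ← exp_nat_mul, exp_le_exp]
          nlinarith [log_two_gt_d9]
        have h2 : p ≤ 2 ^ J := by exact_mod_cast h1
        exact h2.trans_lt (Nat.pow_lt_pow_right (by norm_num) (Nat.lt_succ_self J))
    _ ≤ 4 * (1 + log J) := sum_inv_primes_lt_two_pow_le J
    _ ≤ 4 * (1 + log (3 * u)) := by
        gcongr
        linarith

theorem sieveParameters_oddPrimesUpTo {n : ℕ} (hn : 0 < n) (hL : 0 < log n)
    (hy : 48 ≤ log (log n)) (hy' : 65536 * log (log n) ^ 3 ≤ exp (log (log n) / 4)) :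
    SieveParameters n (oddPrimesUpTo n) (kp n) (log (log n)) := by
  set y := log (log n) with hydef
  have hy0 : 0 < y := by linarith
  have hLy : log n = exp y := (exp_log hL).symm
  have hk0 : 0 ≤ kp n := by unfold kp; positivity
  have hL' : log n = 1024 * (kp n ^ 2 * y) := log_eq_kp_sq_mul hL.le hy0
  have hk : exp (3 * y / 8) * (4 * (1 + y)) ≤ kp n := by
    refine le_of_sq_le_sq ?_ hk0
    have h1 : 1024 * y * (exp (3 * y / 8) * (4 * (1 + y))) ^ 2 ≤ 1024 * y * kp n ^ 2 := by
      calc 1024 * y * (exp (3 * y / 8) * (4 * (1 + y))) ^ 2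
          = exp (3 * y / 4) * (16384 * y * (1 + y) ^ 2) := by
            rw [mul_pow, ← exp_nat_mul]
            ring_nf
        _ ≤ exp (3 * y / 4) * exp (y / 4) := by
            gcongr
            refine le_trans ?_ hy'
            have : (1 + y) ^ 2 ≤ 4 * y ^ 2 := by nlinarith
            nlinarith [mul_le_mul_of_nonneg_left this hy0.le]
        _ = 1024 * y * kp n ^ 2 := by
            rw [← exp_add, show 3 * y / 4 + y / 4 = y by ring, ← hLy, hL']
            ring
    exact le_of_mul_le_mul_left h1 (by positivity)
  have hexp : 1 ≤ exp (3 * y / 8) := one_le_exp (by positivity)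
  have hk1 : 1 ≤ kp n := by nlinarith
  have hky : 48 ≤ kp n * y := by nlinarith
  have hu : 1 ≤ kp n * y / 32 := by linarith
  refine ⟨hk1, hy, ?_, ?_, ?_, ?_, ?_⟩
  · rw [← hL', exp_log (by exact_mod_cast hn)]
  · exact fun p hp ↦ (mem_oddPrimesUpTo.1 hp).1.1
  · intro p hp
    obtain ⟨⟨hp, -⟩, hp2⟩ := mem_oddPrimesUpTo.1 hp
    have := hp.two_le
    omega
  · intro p hp
    rw [← Wp_eq hy0]
    exact (mem_oddPrimesUpTo.1 hp).1.2
  · refine le_trans ?_ hk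
    gcongr
    refine (sum_inv_oddPrimesUpTo_le hu (Wp_eq hy0)).trans ?_
    gcongr
    refine log_le_log (by positivity) ?_
    rw [hL']
    nlinarith [mul_le_mul_of_nonneg_right hk1 (by positivity : 0 ≤ kp n * y)]

theorem eventually_sieveParameters :
    ∀ᶠ n : ℕ in atTop, 0 < log n ∧ SieveParameters n (oddPrimesUpTo n) (kp n) (log (log n)) := by
  have hlog : Tendsto (fun n : ℕ ↦ log n) atTop atTop :=
    tendsto_log_atTop.comp tendsto_natCast_atTop_atTop
  have hloglog : Tendsto (fun n : ℕ ↦ log (log n)) atTop atTop := tendsto_log_atTop.comp hlog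
  have hexp : ∀ᶠ y : ℝ in atTop, 65536 * y ^ 3 ≤ exp (y / 4) := by
    have h := (isLittleO_pow_exp_pos_mul_atTop 3 (show (0 : ℝ) < 1 / 4 by norm_num)).def
      (show (0 : ℝ) < 1 / 65536 by norm_num)
    filter_upwards [h, eventually_ge_atTop 0] with y hy hy0
    rw [norm_of_nonneg (by positivity), norm_of_nonneg (by positivity)] at hy
    rw [show y / 4 = 1 / 4 * y by ring]
    linarith
  filter_upwards [eventually_gt_atTop 0, hlog.eventually_gt_atTop 0,
    hloglog.eventually_ge_atTop 48, hloglog.eventually hexp] with n h1 h2 h3 h4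
  exact ⟨h2, sieveParameters_oddPrimesUpTo h1 h2 h3 h4⟩

end Parameters

section Intervals

open Finset

theorem mem_image_mul_add_one {n a : ℕ} {m : ℕ} :
    m ∈ (range n).image (fun j ↦ a * j + 1) ↔ ∃ j < n, a * j + 1 = m := by
  simp

theorem card_image_mul_add_one (n : ℕ) {a : ℕ} (ha : 0 < a) :
    #((range n).image (fun j ↦ a * j + 1)) = n := by
  rw [card_image_of_injective, card_range]
  intro i j hij
  have : a * i + 1 = a * j + 1 := hij
  exact Nat.eq_of_mul_eq_mul_left ha (by omega)

theorem mem_image_one_mul_add_one {n m : ℕ} :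
    m ∈ (range n).image (fun j ↦ 1 * j + 1) ↔ 1 ≤ m ∧ m ≤ n := by
  rw [mem_image_mul_add_one]
  exact ⟨by rintro ⟨j, hj, rfl⟩; omega, fun h ↦ ⟨m - 1, by omega, by omega⟩⟩

theorem mem_image_two_mul_add_one {n m : ℕ} :
    m ∈ (range n).image (fun j ↦ 2 * j + 1) ↔ m ∈ oddSet n := by
  rw [mem_image_mul_add_one]
  constructor
  · rintro ⟨j, hj, rfl⟩
    exact ⟨⟨j, rfl⟩, by omega⟩
  · rintro ⟨⟨j, rfl⟩, hj⟩
    exact ⟨j, by omega, rfl⟩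

theorem BSet_eq (n : ℕ) (S : Set ℕ) :
    BSet n S = exactDivisorSet ((range n).image (fun j ↦ 1 * j + 1)) (oddPrimesUpTo n) S := by
  ext m
  simp only [BSet, exactDivisorSet, Set.mem_ofPred_eq, mem_image_one_mul_add_one,
    ← coe_oddPrimesUpTo, mem_coe, and_assoc]

theorem CSet_eq (n : ℕ) (S : Set ℕ) :
    CSet n S = exactDivisorSet ((range n).image (fun j ↦ 2 * j + 1)) (oddPrimesUpTo n) S := by
  ext m
  simp only [CSet, exactDivisorSet, Set.mem_ofPred_eq, mem_image_two_mul_add_one,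
    ← coe_oddPrimesUpTo, mem_coe]

end Intervals

/-- The assignment ("template") lemma.  Labels are modelled by `Option (Set ℕ)`:
`some S` is the label `S` (a subset of `𝒫'_W` of size `< k`) and `none` is the label `∗`. -/
theorem exists_assignment_functions :
    ∃ δ : ℝ, 0 < δ ∧ ∃ N : ℕ, ∀ n : ℕ, N ≤ n →
      ∃ φ₁ φ₂ : ℕ → Option (Set ℕ),
        -- labels are subsets of 𝒫'_W of size < k (or ∗)
        (∀ m : ℕ, ∀ S : Set ℕ, φ₁ m = some S → S ⊆ primesLe' n ∧ (S.ncard : ℝ) < kp n) ∧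
        (∀ m : ℕ, ∀ S : Set ℕ, φ₂ m = some S → S ⊆ primesLe' n ∧ (S.ncard : ℝ) < kp n) ∧
        -- (1)
        (∀ m₁ ∈ BgeK n, φ₁ m₁ = none) ∧
        (∀ m₂ ∈ CgeK n, φ₂ m₂ = none) ∧
        -- (2)
        (∀ S T : Set ℕ, S ⊆ primesLe' n → T ⊆ primesLe' n → (S ∩ T).Nonempty →
          (∀ x ∈ BSet n S, φ₁ x ≠ some T) ∧ (∀ y ∈ CSet n T, φ₂ y ≠ some S)) ∧
        -- (3)
        (∀ S₁ S₂ : Set ℕ, S₁ ⊆ primesLe' n → S₂ ⊆ primesLe' n →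
            (S₁.ncard : ℝ) < kp n → (S₂.ncard : ℝ) < kp n →
          {m₁ ∈ BSet n S₁ | φ₁ m₁ = some S₂}.ncard
            = {m₂ ∈ CSet n S₂ | φ₂ m₂ = some S₁}.ncard) ∧
        -- (4)
        (∀ S₁ S₂ : Set ℕ, S₁ ⊆ primesLe' n → S₂ ⊆ primesLe' n →
            (S₁.ncard : ℝ) < kp n → (S₂.ncard : ℝ) < kp n → S₁ ∩ S₂ = ∅ →
          (1 - Real.exp (-δ * Real.sqrt (Real.log n * Real.log (Real.log n)))) *
              ((n : ℝ) * (∏ᶠ p ∈ S₁, ((p : ℝ))⁻¹) * (∏ᶠ p ∈ S₂, ((p : ℝ))⁻¹) *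
                ∏ᶠ p ∈ primesLe' n \ (S₁ ∪ S₂), (1 - 2 * ((p : ℝ))⁻¹))
            ≤ ({m₁ ∈ BSet n S₁ | φ₁ m₁ = some S₂}.ncard : ℝ) ∧
          ({m₁ ∈ BSet n S₁ | φ₁ m₁ = some S₂}.ncard : ℝ) ≤
            (1 + Real.exp (-δ * Real.sqrt (Real.log n * Real.log (Real.log n)))) *
              ((n : ℝ) * (∏ᶠ p ∈ S₁, ((p : ℝ))⁻¹) * (∏ᶠ p ∈ S₂, ((p : ℝ))⁻¹) *
                ∏ᶠ p ∈ primesLe' n \ (S₁ ∪ S₂), (1 - 2 * ((p : ℝ))⁻¹))) ∧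
        -- (5)
        (({m : ℕ | 1 ≤ m ∧ m ≤ n ∧ φ₁ m = none}.ncard : ℝ) ≤ 2 * ap n ^ ((1 : ℝ) / 2) * n) ∧
        -- (6)
        (({m ∈ oddSet n | φ₂ m = none}.ncard : ℝ) ≤ 2 * ap n ^ ((1 : ℝ) / 2) * n) := by
  obtain ⟨N, hN⟩ := eventually_atTop.1 eventually_sieveParameters
  refine ⟨2 ^ (-7 : ℤ), by norm_num, N, fun n hn ↦ ?_⟩
  obtain ⟨hL, h⟩ := hN n hn
  set P := oddPrimesUpTo n with hP
  have hPcoe : (P : Set ℕ) = primesLe' n := coe_oddPrimesUpTo n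
  have hy : 48 ≤ log (log n) := h.le_y
  set E := exp (-(kp n * log (log n) / 4)) with hE
  have hδ : exp (-(2 : ℝ) ^ (-7 : ℤ) * √(log n * log (log n))) = E := by
    rw [hE, kp_mul_loglog (by linarith)]
    congr 1
    ring
  have hα : 2 * E * n ≤ 2 * ap n ^ ((1 : ℝ) / 2) * n := by
    gcongr
    exact exp_neg_le_ap_rpow hL (by linarith) h.one_le_k
  have hE1 : E ≤ 1 := exp_le_one_iff.2 (by linarith [h.le_ky, h.one_le_k])
  obtain ⟨φ₁, hlabel₁, hstar₁, hdisj₁, hcount₁, hnone₁⟩ := h.exists_labelling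
    (card_image_mul_add_one n one_pos) fun T hT ↦ abs_card_filter_forall_prime_dvd_sub_le n one_pos
      (fun p hp ↦ h.prime p (hT hp)) fun p _ ↦ Nat.coprime_one_right p
  obtain ⟨φ₂, hlabel₂, hstar₂, hdisj₂, hcount₂, hnone₂⟩ := h.exists_labelling
    (card_image_mul_add_one n two_pos) fun T hT ↦ abs_card_filter_forall_prime_dvd_sub_le n two_pos
      (fun p hp ↦ h.prime p (hT hp)) fun p hp ↦
        (Nat.coprime_primes (h.prime p (hT hp)) Nat.prime_two).2 (by
          have := h.three_le p (hT hp)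
          omega)
  have hB := fun S ↦ (BSet_eq n S).symm
  have hC := fun S ↦ (CSet_eq n S).symm
  rw [← hP] at hB hC
  simp only [hB, hC] at hstar₁ hstar₂ hdisj₁ hdisj₂ hcount₁ hcount₂
  simp only [mem_image_one_mul_add_one, mem_image_two_mul_add_one, ← hE] at hnone₁ hnone₂
  simp only [hPcoe] at hlabel₁ hlabel₂ hstar₁ hstar₂ hdisj₁ hdisj₂
  have hfin : ∀ S ⊆ primesLe' n, ∃ S' : Finset ℕ, (S' : Set ℕ) = S ∧ S' ⊆ P := by
    intro S hS
    rw [← hPcoe] at hS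
    obtain ⟨S', rfl⟩ := (P.finite_toSet.subset hS).exists_finset_coe
    exact ⟨S', rfl, Finset.coe_subset.1 hS⟩
  refine ⟨φ₁, φ₂, hlabel₁, hlabel₂, ?_, ?_, ?_, ?_, ?_, ?_, hnone₂.trans hα⟩
  · rintro m ⟨-, hm⟩
    refine hstar₁ m fun S hS hk hmS ↦ hm ?_
    exact Set.mem_biUnion (show S ∈ {S : Set ℕ | S ⊆ primesLe' n ∧ (S.ncard : ℝ) < kp n} from
      ⟨hS, hk⟩) hmS
  · rintro m ⟨-, hm⟩
    refine hstar₂ m fun S hS hk hmS ↦ hm ?_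
    exact Set.mem_biUnion (show S ∈ {S : Set ℕ | S ⊆ primesLe' n ∧ (S.ncard : ℝ) < kp n} from
      ⟨hS, hk⟩) hmS
  · intro S T hS hT hST
    exact ⟨hdisj₁ S T hS hT hST, hdisj₂ T S hT hS (by rwa [Set.inter_comm])⟩
  · intro S T hS hT hSk hTk
    obtain ⟨S, rfl, hSP⟩ := hfin S hS
    obtain ⟨T, rfl, hTP⟩ := hfin T hT
    rw [Set.ncard_coe_finset] at hSk hTk
    rw [hcount₁ S T hSP hTP hSk hTk, hcount₂ T S hTP hSP hTk hSk, labelCount, labelCount,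
      pairDensity_comm]
  · intro S T hS hT hSk hTk hST
    obtain ⟨S, rfl, hSP⟩ := hfin S hS
    obtain ⟨T, rfl, hTP⟩ := hfin T hT
    rw [Set.ncard_coe_finset] at hSk hTk
    rw [← Set.disjoint_iff_inter_eq_empty, Finset.disjoint_coe] at hST
    have hmain : (n : ℝ) * (∏ᶠ p ∈ (S : Set ℕ), ((p : ℝ))⁻¹) * (∏ᶠ p ∈ (T : Set ℕ), ((p : ℝ))⁻¹) *
        ∏ᶠ p ∈ primesLe' n \ ((S : Set ℕ) ∪ T), (1 - 2 * ((p : ℝ))⁻¹)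
        = n * pairDensity P (fun p ↦ (p : ℝ)⁻¹) S T := by
      rw [← hPcoe, ← Finset.coe_union, ← Finset.coe_sdiff, finprod_mem_coe_finset,
        finprod_mem_coe_finset, finprod_mem_coe_finset, pairDensity, if_pos hST]
      ring
    have hγ : 0 ≤ n * pairDensity P (fun p ↦ (p : ℝ)⁻¹) S T :=
      mul_nonneg (Nat.cast_nonneg n) (pairDensity_nonneg (fun p ↦ by positivity)
        (fun p hp ↦ by linarith [h.inv_le hp]) S T)
    rw [hmain, hδ, hcount₁ S T hSP hTP hSk hTk]
    refine ⟨h.floor_lower_bound hSP hTP hSk hTk, ?_⟩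
    refine (Nat.floor_le (mul_nonneg (by linarith) hγ)).trans ?_
    gcongr
    linarith [exp_pos (-(kp n * log (log n) / 4))]
  · refine le_trans (le_of_eq ?_) (hnone₁.trans hα)
    simp only [and_assoc]
end
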